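/- Let X be an algebraic hypersurface of PG(4,9) of degree 4 defined over GF(9), not containing any plane, whose number of GF(9)-rational points equals 3^7 + 3^5 + 3^2 + 1 (the number of points of the non-singular Hermitian variety H(4,9)). If there exists at least one plane of PG(4,9) meeting X in exactly 3^2 + 1 = 10 rational points, then X is a non-singular Hermitian variety H(4,9) of PG(4,9). -/

import Mathlib

open MvPolynomial Module

/-- The set of points of the projective subspace of `PG(n-1, F)` determined by
the linear subspace `W` of `F^n`. -/
def projPts {F : Type} [Field F] {n : ℕ} (W : Submodule F (Fin n → F)) :
    Set (Projectivization F (Fin n → F)) :=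
  {P | P.submodule ≤ W}

/-- The set of `F`-rational points of the hypersurface of `PG(n-1, F)` defined by the
homogeneous polynomial `f`. -/
def hypersurfacePts {F : Type} [Field F] {n : ℕ} (f : MvPolynomial (Fin n) F) :
    Set (Projectivization F (Fin n → F)) :=
  {P | MvPolynomial.eval P.rep f = 0}


/-- `S` is a non-singular Hermitian variety of `PG(n-1, q²)`: the set of points `⟨v⟩`
with `vᵀ M v^(q) = 0` for an invertible matrix `M` with `Mᵀ` the entrywise `q`-th
power of `M`. -/
def IsNonsingularHermitian (q : ℕ) {F : Type} [Field F] {n : ℕ}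
    (S : Set (Projectivization F (Fin n → F))) : Prop :=
  ∃ M : Matrix (Fin n) (Fin n) F, IsUnit M.det ∧ M.transpose = M.map (· ^ q) ∧
    S = {P | ∑ i, ∑ j, P.rep i * M i j * (P.rep j) ^ q = 0}

/-- Homogeneous-like restriction to lines: degree at most `k`, with leading coefficient `φ d`. -/
def LD {F V : Type} [Field F] [AddCommGroup V] [Module F V] (φ : V → F) (k : ℕ) : Prop :=
  ∀ x d : V, ∃ P : Polynomial F, P.natDegree ≤ k ∧ P.coeff k = φ d ∧
    ∀ r : F, P.eval r = φ (x + r • d)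

section LDlemmas
variable {F V : Type} [Field F] [AddCommGroup V] [Module F V]

lemma LD.mul {φ ψ : V → F} {a b : ℕ} (h1 : LD φ a) (h2 : LD ψ b) :
    LD (fun v => φ v * ψ v) (a + b) := by
  intro x d
  obtain ⟨P, hP, hPc, hPe⟩ := h1 x d
  obtain ⟨R, hR, hRc, hRe⟩ := h2 x d
  refine ⟨P * R, Polynomial.natDegree_mul_le_of_le hP hR, ?_, ?_⟩
  · rw [Polynomial.coeff_mul_add_eq_of_natDegree_le hP hR, hPc, hRc]
  · intro r
    rw [Polynomial.eval_mul, hPe, hRe]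

lemma LD.pow {φ : V → F} {a : ℕ} (h1 : LD φ a) (n : ℕ) :
    LD (fun v => φ v ^ n) (n * a) := by
  intro x d
  obtain ⟨P, hP, hPc, hPe⟩ := h1 x d
  refine ⟨P ^ n, Polynomial.natDegree_pow_le_of_le n hP, ?_, ?_⟩
  · rw [Polynomial.coeff_pow_of_natDegree_le hP, hPc]
  · intro r
    rw [Polynomial.eval_pow, hPe]

lemma LD.sum {ι : Type} {s : Finset ι} {φ : ι → V → F} {a : ℕ} (h : ∀ i ∈ s, LD (φ i) a) :
    LD (fun v => ∑ i ∈ s, φ i v) a := by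
  classical
  intro x d
  choose! P h1 h2 h3 using fun i (hi : i ∈ s) => h i hi x d
  refine ⟨∑ i ∈ s, P i, Polynomial.natDegree_sum_le_of_forall_le s P h1, ?_, ?_⟩
  · rw [Polynomial.finsetSum_coeff]
    exact Finset.sum_congr rfl h2
  · intro r
    rw [Polynomial.eval_finsetSum]
    exact Finset.sum_congr rfl (fun i hi => h3 i hi r)

lemma LD.const (c : F) : LD (fun _ : V => c) 0 := fun x d =>
  ⟨Polynomial.C c, by simp, by simp, by simp⟩

lemma LD.prod {ι : Type} {s : Finset ι} {φ : ι → V → F} {a : ι → ℕ} (h : ∀ i ∈ s, LD (φ i) (a i)) :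
    LD (fun v => ∏ i ∈ s, φ i v) (∑ i ∈ s, a i) := by
  classical
  induction s using Finset.induction_on with
  | empty => simpa using LD.const (1 : F)
  | insert i s hi ih =>
    simp only [Finset.prod_insert hi, Finset.sum_insert hi]
    exact (h i (Finset.mem_insert_self i s)).mul
      (ih fun j hj => h j (Finset.mem_insert_of_mem hj))

lemma LD.coord {n : ℕ} (i : Fin n) : LD (fun v : Fin n → F => v i) 1 := fun x d =>
  ⟨Polynomial.C (d i) * Polynomial.X + Polynomial.C (x i), Polynomial.natDegree_linear_le,
    by simp, by intro r; simp; ring⟩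

lemma LD.eval {n k : ℕ} {p : MvPolynomial (Fin n) F} (hp : p.IsHomogeneous k) :
    LD (fun v => MvPolynomial.eval v p) k := by
  have h : (fun v => MvPolynomial.eval v p) =
      fun v => ∑ e ∈ p.support, (p.coeff e * ∏ i, v i ^ e i) := by
    funext v
    rw [MvPolynomial.eval_eq']
  rw [h]
  refine LD.sum fun e he => ?_
  have he' : ∑ i, e i * 1 = k := by
    have := hp (MvPolynomial.mem_support_iff.mp he)
    rw [← this]
    simp [Finsupp.weight_apply, Finsupp.sum_fintype]
  have := (LD.const (V := Fin n → F) (p.coeff e)).mul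
    (LD.prod (s := Finset.univ) (φ := fun i (v : Fin n → F) => v i ^ e i) (a := fun i => e i * 1)
    fun i _ => (LD.coord i).pow (e i))
  rwa [he', zero_add] at this

lemma LD.d0 {φ : V → F} (h : LD φ 0) (x d : V) : φ x = φ d := by
  obtain ⟨P, hP, hc, he⟩ := h x d
  have h0 := he 0
  rw [Polynomial.eq_C_of_natDegree_le_zero hP] at h0
  simp only [Polynomial.eval_C, zero_smul, add_zero] at h0
  rw [← h0, hc]

lemma LD.d1 {φ : V → F} (h : LD φ 1) (x d : V) : ∀ r : F, φ (x + r • d) = φ x + r * φ d := by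
  obtain ⟨P, hP, hc, he⟩ := h x d
  have key : ∀ r : F, φ (x + r • d) = P.coeff 0 + r * φ d := fun r => by
    rw [← he r, Polynomial.eval_eq_sum_range' (Nat.lt_succ_of_le hP)]
    simp [Finset.sum_range_succ, hc]; ring
  have h0 := key 0
  simp only [zero_smul, add_zero, zero_mul] at h0
  intro r; rw [key, h0]

lemma LD.d2 {φ : V → F} (h : LD φ 2) (x d : V) :
    ∃ a : F, ∀ r : F, φ (x + r • d) = φ x + a * r + φ d * r ^ 2 := by
  obtain ⟨P, hP, hc, he⟩ := h x d
  have key : ∀ r : F, φ (x + r • d) = P.coeff 0 + P.coeff 1 * r + φ d * r ^ 2 := fun r => by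
    rw [← he r, Polynomial.eval_eq_sum_range' (Nat.lt_succ_of_le hP)]
    simp [Finset.sum_range_succ, hc]
  have h0 := key 0
  simp only [zero_smul, add_zero, mul_zero, ne_eq, OfNat.ofNat_ne_zero, not_false_eq_true,
    zero_pow] at h0
  exact ⟨_, fun r => by rw [key, h0]⟩

lemma LD.d3 {φ : V → F} (h : LD φ 3) (x d : V) :
    ∃ a b : F, ∀ r : F, φ (x + r • d) = φ x + a * r + b * r ^ 2 + φ d * r ^ 3 := by
  obtain ⟨P, hP, hc, he⟩ := h x d
  have key : ∀ r : F, φ (x + r • d) =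
      P.coeff 0 + P.coeff 1 * r + P.coeff 2 * r ^ 2 + φ d * r ^ 3 := fun r => by
    rw [← he r, Polynomial.eval_eq_sum_range' (Nat.lt_succ_of_le hP)]
    simp [Finset.sum_range_succ, hc]
  have h0 := key 0
  simp only [zero_smul, add_zero, mul_zero, ne_eq, OfNat.ofNat_ne_zero, not_false_eq_true,
    zero_pow] at h0
  exact ⟨_, _, fun r => by rw [key, h0]⟩

lemma LD.d4 {φ : V → F} (h : LD φ 4) (x d : V) :
    ∃ a b c : F, ∀ r : F,
      φ (x + r • d) = φ x + a * r + b * r ^ 2 + c * r ^ 3 + φ d * r ^ 4 := by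
  obtain ⟨P, hP, hc, he⟩ := h x d
  have key : ∀ r : F, φ (x + r • d) =
      P.coeff 0 + P.coeff 1 * r + P.coeff 2 * r ^ 2 + P.coeff 3 * r ^ 3 + φ d * r ^ 4 :=
    fun r => by
      rw [← he r, Polynomial.eval_eq_sum_range' (Nat.lt_succ_of_le hP)]
      simp [Finset.sum_range_succ, hc]
  have h0 := key 0
  simp only [zero_smul, add_zero, mul_zero, ne_eq, OfNat.ofNat_ne_zero, not_false_eq_true,
    zero_pow] at h0
  exact ⟨_, _, _, fun r => by rw [key, h0]⟩

end LDlemmas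

section Univariate
variable {F : Type} [Field F] [Fintype F]

lemma char_three (hF : Fintype.card F = 9) : (3 : F) = 0 := by
  have h := FiniteField.cast_card_eq_zero F
  rw [hF] at h
  have h' : (3 : F) * 3 = 0 := by
    have : ((9 : ℕ) : F) = 3 * 3 := by norm_num
    rw [← this, h]
  rcases mul_eq_zero.mp h' with h | h <;> exact h

lemma pow_nine (hF : Fintype.card F = 9) (x : F) : x ^ 9 = x := by
  rw [← hF]; exact FiniteField.pow_card x

lemma pow_eight (hF : Fintype.card F = 9) {x : F} (hx : x ≠ 0) : x ^ 8 = 1 := by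
  have := FiniteField.pow_card_sub_one_eq_one x hx
  rwa [hF] at this

/-- A polynomial function of degree at most eight vanishing on `GF(9)` has zero coefficients. -/
lemma poly9 (hF : Fintype.card F = 9) (a0 a1 a2 a3 a4 a5 a6 a7 a8 : F)
    (h : ∀ r : F, a0 + a1 * r + a2 * r ^ 2 + a3 * r ^ 3 + a4 * r ^ 4 + a5 * r ^ 5 + a6 * r ^ 6 +
      a7 * r ^ 7 + a8 * r ^ 8 = 0) :
    a0 = 0 ∧ a1 = 0 ∧ a2 = 0 ∧ a3 = 0 ∧ a4 = 0 ∧ a5 = 0 ∧ a6 = 0 ∧ a7 = 0 ∧ a8 = 0 := by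
  classical
  let c : Fin 9 → F := ![a0, a1, a2, a3, a4, a5, a6, a7, a8]
  let P : Polynomial F := ∑ i : Fin 9, Polynomial.C (c i) * Polynomial.X ^ (i : ℕ)
  have hdeg : P.natDegree < Fintype.card F := by
    rw [hF]
    refine Nat.lt_succ_of_le (Polynomial.natDegree_sum_le_of_forall_le _ _ fun i _ => ?_)
    exact (Polynomial.natDegree_C_mul_X_pow_le _ _).trans (by omega)
  have hP : P = 0 := by
    refine Polynomial.eq_zero_of_natDegree_lt_card_of_eval_eq_zero P
      (f := (id : F → F)) Function.injective_id (fun r => ?_) hdeg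
    have := h r
    simp only [P, c, Fin.sum_univ_succ]
    simp
    linear_combination this
  have hc : ∀ i : Fin 9, c i = 0 := by
    intro i
    have : P.coeff (i : ℕ) = c i := by
      simp only [P, Polynomial.finsetSum_coeff, Polynomial.coeff_C_mul_X_pow]
      rw [Finset.sum_eq_single i]
      · simp
      · intro j _ hj
        rw [if_neg]
        intro h
        exact hj (Fin.ext h).symm
      · simp
    rw [← this, hP, Polynomial.coeff_zero]
  exact ⟨hc 0, hc 1, hc 2, hc 3, hc 4, hc 5, hc 6, hc 7, hc 8⟩

/-- Three distinct roots of a monic cubic over `GF(9)`. -/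
lemma cubic_split (hF : Fintype.card F = 9) {m s g a b c : F} (hab : a ≠ b) (hac : a ≠ c)
    (hbc : b ≠ c) (ha : a ^ 3 + m * a ^ 2 + s * a + g = 0)
    (hb : b ^ 3 + m * b ^ 2 + s * b + g = 0) (hc : c ^ 3 + m * c ^ 2 + s * c + g = 0) :
    m * (m ^ 6 + m ^ 2 * s ^ 2 - m ^ 3 * g - s ^ 3) = 0 ∧ (m = 0 → s ^ 4 = 1 ∧ g ^ 3 = s ^ 3 * g) := by
  have h3 := char_three hF
  have vand : ∀ x y z : F, (∀ r : F, r = a ∨ r = b ∨ r = c → x * r ^ 2 + y * r + z = 0) →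
      x = 0 ∧ y = 0 ∧ z = 0 := by
    intro x y z h
    have e1 := h a (by simp)
    have e2 := h b (by simp)
    have e3 := h c (by simp)
    have f1 : x * (a + b) + y = 0 := by
      apply mul_left_cancel₀ (sub_ne_zero.mpr hab)
      linear_combination e1 - e2
    have f2 : x * (a + c) + y = 0 := by
      apply mul_left_cancel₀ (sub_ne_zero.mpr hac)
      linear_combination e1 - e3
    have f3 : x = 0 := by
      apply mul_left_cancel₀ (sub_ne_zero.mpr hbc)
      linear_combination f1 - f2
    subst f3
    have f4 : y = 0 := by linear_combination f1
    subst f4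
    exact ⟨rfl, rfl, by linear_combination e1⟩
  have key := vand (-(m ^ 7 + m ^ 3 * s ^ 2 + 2 * m ^ 4 * g - s ^ 3 * m))
    (-(m ^ 3 * (m ^ 3 * s - m ^ 2 * g + m * s ^ 2 - s * g) - s ^ 4) - 1)
    (-(m ^ 3 * (m ^ 3 * g + m * s * g + g ^ 2) - s ^ 3 * g + g ^ 3)) ?_
  · obtain ⟨k1, k2, k3⟩ := key
    constructor
    · linear_combination -k1 - m ^ 4 * g * h3
    · rintro rfl
      exact ⟨by linear_combination k2, by linear_combination -k3⟩
  · intro r hr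
    have hr0 : r ^ 3 + m * r ^ 2 + s * r + g = 0 := by
      rcases hr with rfl | rfl | rfl <;> assumption
    have h9 := pow_nine hF r
    have c3 : ∀ x y : F, (x + y) ^ 3 = x ^ 3 + y ^ 3 := fun x y => by
      linear_combination (x ^ 2 * y + x * y ^ 2) * h3
    have r3 : r ^ 3 = -(m * r ^ 2 + s * r + g) := by linear_combination hr0
    have r4 : r ^ 4 = (m ^ 2 - s) * r ^ 2 + (m * s - g) * r + m * g := by
      linear_combination r * r3 - m * r3
    have r6 : r ^ 6 = (m ^ 4 + s ^ 2 + 2 * m * g) * r ^ 2 +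
        (m ^ 3 * s - m ^ 2 * g + m * s ^ 2 - s * g) * r + (m ^ 3 * g + m * s * g + g ^ 2) := by
      have : r ^ 6 = (m * r ^ 2 + s * r + g) ^ 2 := by
        calc r ^ 6 = (r ^ 3) ^ 2 := by ring
          _ = _ := by rw [r3]; ring
      rw [this]
      linear_combination m ^ 2 * r4 + 2 * m * s * r3 +
        (-m^2*s*r^2 - m*s^2*r  + s*g*r  - m*s*g) * h3
    have r9 : r ^ 9 = -(m ^ 3 * r ^ 6 + s ^ 3 * r ^ 3 + g ^ 3) := by
      calc r ^ 9 = (r ^ 3) ^ 3 := by ring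
        _ = -(m * r ^ 2 + s * r + g) ^ 3 := by rw [r3]; ring
        _ = _ := by rw [c3, c3]; ring
    linear_combination h9 - r9 + m ^ 3 * r6 + s ^ 3 * r3

end Univariate

section Lines
variable {F : Type} [Field F] [Fintype F]

lemma two_ne (hF : Fintype.card F = 9) : (2 : F) ≠ 0 := by
  intro h
  have h3 := char_three hF
  exact one_ne_zero (α := F) (by linear_combination h3 - h)

lemma lineQ (hF : Fintype.card F = 9) (m0 m1 s0 s1 s2 g0 g1 g2 g3 : F)
    (h1 : ∀ r : F, (m0 + m1 * r) * ((m0 + m1 * r) ^ 6 +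
      (m0 + m1 * r) ^ 2 * (s0 + s1 * r + s2 * r ^ 2) ^ 2 -
      (m0 + m1 * r) ^ 3 * (g0 + g1 * r + g2 * r ^ 2 + g3 * r ^ 3) -
      (s0 + s1 * r + s2 * r ^ 2) ^ 3) = 0)
    (h2 : ∀ r : F, m0 + m1 * r = 0 → s0 + s1 * r + s2 * r ^ 2 ≠ 0) : m1 = 0 := by
  by_contra hm
  let m : Polynomial F := Polynomial.C m0 + Polynomial.C m1 * Polynomial.X
  let s : Polynomial F := Polynomial.C s0 + Polynomial.C s1 * Polynomial.X +
    Polynomial.C s2 * Polynomial.X ^ 2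
  let g : Polynomial F := Polynomial.C g0 + Polynomial.C g1 * Polynomial.X +
    Polynomial.C g2 * Polynomial.X ^ 2 + Polynomial.C g3 * Polynomial.X ^ 3
  let W : Polynomial F := m ^ 6 + m ^ 2 * s ^ 2 - m ^ 3 * g - s ^ 3
  have hdm : m.natDegree ≤ 1 := by simp only [m]; compute_degree
  have hds : s.natDegree ≤ 2 := by simp only [s]; compute_degree
  have hdg : g.natDegree ≤ 3 := by simp only [g]; compute_degree
  have p1 : (m ^ 6).natDegree ≤ 6 := (Polynomial.natDegree_pow_le_of_le 6 hdm)
  have p2 : (m ^ 2 * s ^ 2).natDegree ≤ 6 :=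
    Polynomial.natDegree_mul_le_of_le (Polynomial.natDegree_pow_le_of_le 2 hdm)
      (Polynomial.natDegree_pow_le_of_le 2 hds)
  have p3 : (m ^ 3 * g).natDegree ≤ 6 :=
    Polynomial.natDegree_mul_le_of_le (Polynomial.natDegree_pow_le_of_le 3 hdm) hdg
  have p4 : (s ^ 3).natDegree ≤ 6 := Polynomial.natDegree_pow_le_of_le 3 hds
  have hW : W.natDegree ≤ 6 :=
    Polynomial.natDegree_sub_le_of_le (Polynomial.natDegree_sub_le_of_le
      (Polynomial.natDegree_add_le_of_degree_le p1 p2) p3) p4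
  have hmW : (m * W).natDegree < Fintype.card F := by
    rw [hF]
    have := Polynomial.natDegree_mul_le_of_le hdm hW
    omega
  have hz : m * W = 0 := by
    refine Polynomial.eq_zero_of_natDegree_lt_card_of_eval_eq_zero _
      (f := (id : F → F)) Function.injective_id (fun r => ?_) hmW
    simpa [m, W, s, g] using h1 r
  have hm0 : m ≠ 0 := by
    intro h
    have : m.coeff 1 = m1 := by simp [m]
    rw [h] at this
    exact hm (by simpa using this.symm)
  have hW0 : W = 0 := (mul_eq_zero.mp hz).resolve_left hm0
  have hr : m0 + m1 * (-m0 / m1) = 0 := by field_simp; ring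
  have hs := h2 _ hr
  have := congrArg (Polynomial.eval (-m0 / m1)) hW0
  simp only [W, m, s, Polynomial.eval_sub, Polynomial.eval_add, Polynomial.eval_mul,
    Polynomial.eval_pow, Polynomial.eval_C, Polynomial.eval_X, hr, Polynomial.eval_zero] at this
  apply hs
  apply pow_eq_zero_iff (n := 3) (by norm_num) |>.mp
  linear_combination -this

lemma lineK (hF : Fintype.card F = 9) (k a0 a1 a2 a3 g0 g1 g2 g3 g4 : F) (hk : k ≠ 0)
    (h : ∀ r : F, k * (k ^ 6 + k ^ 2 * (a0 + a1 * r + a2 * r ^ 2 + a3 * r ^ 3) ^ 2 -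
      k ^ 3 * (g0 + g1 * r + g2 * r ^ 2 + g3 * r ^ 3 + g4 * r ^ 4) -
      (a0 + a1 * r + a2 * r ^ 2 + a3 * r ^ 3) ^ 3) = 0) : a3 = 0 ∧ g4 = 0 := by
  have h3 := char_three hF
  have c3 : ∀ x y : F, (x + y) ^ 3 = x ^ 3 + y ^ 3 := fun x y => by
    linear_combination (x ^ 2 * y + x * y ^ 2) * h3
  obtain ⟨-, -, -, -, e4, e5, e6, -, -⟩ := poly9 hF
    (k ^ 6 + k ^ 2 * a0 ^ 2 - k ^ 3 * g0 - a0 ^ 3)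
    (2 * k ^ 2 * a0 * a1 - k ^ 3 * g1 - a3 ^ 3)
    (k ^ 2 * (a1 ^ 2 + 2 * a0 * a2) - k ^ 3 * g2)
    (k ^ 2 * (2 * a0 * a3 + 2 * a1 * a2) - k ^ 3 * g3 - a1 ^ 3)
    (k ^ 2 * (a2 ^ 2 + 2 * a1 * a3) - k ^ 3 * g4)
    (2 * k ^ 2 * a2 * a3) (k ^ 2 * a3 ^ 2 - a2 ^ 3) 0 0 (by
      intro r
      have h' := (mul_eq_zero.mp (h r)).resolve_left hk
      have h9 := pow_nine hF r
      rw [c3, c3, c3] at h'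
      linear_combination h' + a3 ^ 3 * h9)
  have h2 := two_ne hF
  have e5' : a2 = 0 ∨ a3 = 0 := by
    simpa [h2, hk, mul_assoc] using e5
  have ha3 : a3 = 0 := by
    rcases e5' with h | h
    · subst h
      have : k ^ 2 * a3 ^ 2 = 0 := by linear_combination e6
      simpa [hk] using this
    · exact h
  subst ha3
  have ha2 : a2 = 0 := by
    have : a2 ^ 3 = 0 := by linear_combination -e6
    simpa using this
  subst ha2
  have : k ^ 3 * g4 = 0 := by linear_combination -e4
  exact ⟨rfl, by simpa [hk] using this⟩

lemma lineC (hF : Fintype.card F = 9) (a0 a1 a2 a3 : F)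
    (h : ∀ r : F, (a0 + a1 * r + a2 * r ^ 2 + a3 * r ^ 3) ^ 4 = 1) :
    a1 = 0 ∧ a2 = 0 ∧ a3 = 0 := by
  have h3 := char_three hF
  have c3 : ∀ x y : F, (x + y) ^ 3 = x ^ 3 + y ^ 3 := fun x y => by
    linear_combination (x ^ 2 * y + x * y ^ 2) * h3
  obtain ⟨-, -, e2, -, e4, -, -, -, e8⟩ := poly9 hF
    (a0 ^ 4 - 1) (a2 ^ 3 * a3 + a3 ^ 3 * a0 + a0 ^ 3 * a1) (a3 ^ 3 * a1 + a0 ^ 3 * a2)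
    (a3 ^ 3 * a2 + a1 ^ 3 * a0 + a0 ^ 3 * a3) (a3 ^ 4 + a1 ^ 4) (a1 ^ 3 * a2)
    (a2 ^ 3 * a0 + a1 ^ 3 * a3) (a2 ^ 3 * a1) (a2 ^ 4) (by
      intro r
      have h' := h r
      have h9 := pow_nine hF r
      have : (a0 + a1 * r + a2 * r ^ 2 + a3 * r ^ 3) ^ 4 =
        (a0 + a1 * r + a2 * r ^ 2 + a3 * r ^ 3) ^ 3 * (a0 + a1 * r + a2 * r ^ 2 + a3 * r ^ 3) := by
        ring
      rw [this, c3, c3, c3] at h'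
      linear_combination h' - (a2 ^ 3 * a3 + a3 ^ 3 * (a0 + a1 * r + a2 * r ^ 2 + a3 * r ^ 3)) * h9)
  have ha2 : a2 = 0 := by simpa using e8
  subst ha2
  have e2' : a3 = 0 ∨ a1 = 0 := by simpa using e2
  rcases e2' with h | h
  · subst h
    refine ⟨by simpa using e4, rfl, rfl⟩
  · subst h
    refine ⟨rfl, rfl, by simpa using e4⟩

lemma lineG (hF : Fintype.card F = 9) (c g0 g1 g2 g3 g4 : F)
    (h : ∀ r : F, r ≠ 0 → (g0 + g1 * r + g2 * r ^ 2 + g3 * r ^ 3 + g4 * r ^ 4) ^ 3 =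
      c * (g0 + g1 * r + g2 * r ^ 2 + g3 * r ^ 3 + g4 * r ^ 4)) : g0 ^ 3 = c * g0 := by
  have h3 := char_three hF
  have c3 : ∀ x y : F, (x + y) ^ 3 = x ^ 3 + y ^ 3 := fun x y => by
    linear_combination (x ^ 2 * y + x * y ^ 2) * h3
  have key := (poly9 hF 0 (g0 ^ 3 - c * g0) (g3 ^ 3 - c * g1) (- c * g2) (g1 ^ 3 - c * g3)
    (g4 ^ 3 - c * g4) 0 (g2 ^ 3) 0 (by
      intro r
      by_cases hr : r = 0
      · subst hr; ring
      have h' := h r hr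
      have h9 := pow_nine hF r
      rw [c3, c3, c3, c3] at h'
      linear_combination r * h' - (g3 ^ 3 * r + g4 ^ 3 * r ^ 4) * h9)).2.1
  linear_combination key

lemma root_count (P : Polynomial F) [DecidableEq F] (hP : P ≠ 0) {k : ℕ} (hk : P.natDegree ≤ k) :
    (Finset.univ.filter fun t : F => P.eval t = 0).card ≤ k := by
  have : (Finset.univ.filter fun t : F => P.eval t = 0) = P.roots.toFinset := by
    ext t; simp [hP]
  rw [this]
  exact (Multiset.toFinset_card_le _).trans ((Polynomial.card_roots' P).trans hk)

lemma quad_count [DecidableEq F] {a b c : F} (h : ¬ (a = 0 ∧ b = 0 ∧ c = 0)) :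
    (Finset.univ.filter fun t : F => t ^ 2 * a + t * b + c = 0).card ≤ 2 := by
  let P : Polynomial F := Polynomial.C a * Polynomial.X ^ 2 + Polynomial.C b * Polynomial.X +
    Polynomial.C c
  have hP : P ≠ 0 := by
    intro h0
    apply h
    refine ⟨?_, ?_, ?_⟩
    · have : P.coeff 2 = a := by simp [P]
      rw [← this, h0, Polynomial.coeff_zero]
    · have : P.coeff 1 = b := by simp [P]
      rw [← this, h0, Polynomial.coeff_zero]
    · have : P.coeff 0 = c := by simp [P]
      rw [← this, h0, Polynomial.coeff_zero]
  convert root_count P hP (k := 2) (by simp only [P]; compute_degree) using 5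
  simp [P]; ring

lemma lin_count [DecidableEq F] {b c : F} (h : b ≠ 0) :
    (Finset.univ.filter fun t : F => t * b + c = 0).card ≤ 1 := by
  rw [Finset.card_le_one]
  intro x hx y hy
  simp only [Finset.mem_filter, Finset.mem_univ, true_and] at hx hy
  apply mul_right_cancel₀ h
  linear_combination hx - hy

lemma cubic_count [DecidableEq F] (a b c : F) :
    (Finset.univ.filter fun t : F => t ^ 3 + t ^ 2 * a + t * b + c = 0).card ≤ 3 := by
  let P : Polynomial F := Polynomial.X ^ 3 + Polynomial.C a * Polynomial.X ^ 2 +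
    Polynomial.C b * Polynomial.X + Polynomial.C c
  have hP : P ≠ 0 := by
    intro h0
    have : P.coeff 3 = 1 := by simp [P]
    rw [h0, Polynomial.coeff_zero] at this
    exact zero_ne_one this
  convert root_count P hP (k := 3) (by simp only [P]; compute_degree) using 5
  simp [P]; ring

lemma sum_bound [DecidableEq F] (hF : Fintype.card F = 9) (n : F → ℕ) (P : Polynomial F)
    (hP : P ≠ 0) {k c : ℕ} (hk : P.natDegree ≤ k) (hc : c ≤ 9) (h9 : ∀ r, n r ≤ 9)
    (h : ∀ r, P.eval r ≠ 0 → n r ≤ c) : ∑ r, n r ≤ c * 9 + (9 - c) * k := by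
  calc ∑ r, n r ≤ ∑ r : F, (c + if P.eval r = 0 then (9 - c) else 0) := by
        refine Finset.sum_le_sum fun r _ => ?_
        split_ifs with hr
        · have := h9 r; omega
        · simpa using h r hr
    _ = c * 9 + (9 - c) * (Finset.univ.filter fun t : F => P.eval t = 0).card := by
        rw [Finset.sum_add_distrib, Finset.sum_const, ← Finset.sum_filter, Finset.sum_const,
          Finset.card_univ, hF]
        simp [mul_comm]
    _ ≤ _ := by
        gcongr
        exact root_count P hP hk

lemma biv_count [DecidableEq F] (hF : Fintype.card F = 9) (A B G : Polynomial F)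
    (hA : A.natDegree ≤ 1)
    (hB : B.natDegree ≤ 2) (hG : G.natDegree ≤ 3)
    (h : ∃ r t : F, t ^ 2 * A.eval r + t * B.eval r + G.eval r ≠ 0) :
    ∑ r : F, (Finset.univ.filter fun t : F =>
      t ^ 2 * A.eval r + t * B.eval r + G.eval r = 0).card ≤ 27 := by
  have h9 : ∀ r : F, (Finset.univ.filter fun t : F =>
      t ^ 2 * A.eval r + t * B.eval r + G.eval r = 0).card ≤ 9 := fun r => by
    refine (Finset.card_le_univ _).trans hF.le
  by_cases hA0 : A = 0
  · by_cases hB0 : B = 0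
    · have hG0 : G ≠ 0 := by
        rintro rfl
        obtain ⟨r, t, h⟩ := h
        apply h; simp [hA0, hB0]
      refine (sum_bound hF _ G hG0 hG (c := 0) (by norm_num) h9 ?_).trans (by norm_num)
      intro r hr
      simp [hA0, hB0, hr]
    · refine (sum_bound hF _ B hB0 hB (c := 1) (by norm_num) h9 ?_).trans (by norm_num)
      intro r hr
      simp only [hA0, Polynomial.eval_zero, mul_zero, zero_add]
      exact lin_count hr
  · refine (sum_bound hF _ A hA0 hA (c := 2) (by norm_num) h9 ?_).trans (by norm_num)
    intro r hr
    exact quad_count (fun h => hr h.1)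

end Lines

/-- The local data of the quartic at a nonsingular point. -/
structure CoreData {F V : Type} [Field F] [Fintype F] [AddCommGroup V] [Module F V] [Fintype V]
    [DecidableEq F] (L : V →ₗ[F] F) (Q C G : V → F) : Prop where
  hF : Fintype.card F = 9
  hV : Fintype.card V = 6561
  hL : ∃ y, L y = 1
  hQ : LD Q 2
  hC : LD C 3
  hG : LD G 4
  sQ : ∀ (r : F) x, Q (r • x) = r ^ 2 * Q x
  sC : ∀ (r : F) x, C (r • x) = r ^ 3 * C x
  sG : ∀ (r : F) x, G (r • x) = r ^ 4 * G x
  hN : 19521 ≤ ∑ x : V, (Finset.univ.filter fun t : F =>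
    t ^ 3 * L x + t ^ 2 * Q x + t * C x + G x = 0).card
  hplane : ∀ d1 d2 : V, L d1 = 0 → L d2 = 0 → LinearIndependent F ![d1, d2] →
    ∃ r s t : F, t ^ 2 * Q (r • d1 + s • d2) + t * C (r • d1 + s • d2) + G (r • d1 + s • d2) ≠ 0

namespace CoreData
variable {F V : Type} [Field F] [Fintype F] [AddCommGroup V] [Module F V] [Fintype V]
    [DecidableEq F] [DecidableEq V] {L : V →ₗ[F] F} {Q C G : V → F}

/-- Number of points on the line through the base point in direction `x`. -/
def cnt (L : V →ₗ[F] F) (Q C G : V → F) (x : V) : ℕ :=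
  (Finset.univ.filter fun t : F => t ^ 3 * L x + t ^ 2 * Q x + t * C x + G x = 0).card

/-- The level sets of `L`. -/
def lev (L : V →ₗ[F] F) (r : F) : Finset V := Finset.univ.filter fun x => L x = r

lemma mem_lev {r : F} {x : V} : x ∈ lev L r ↔ L x = r := by simp [lev]

lemma sum_lev (n : V → ℕ) : ∑ x, n x = ∑ r : F, ∑ x ∈ lev L r, n x := by
  unfold lev
  rw [Finset.sum_fiberwise]

lemma card_lev (h : CoreData L Q C G) (r : F) : (lev L r).card = 729 := by
  obtain ⟨y, hy⟩ := h.hL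
  have e : ∀ r : F, (lev L r).card = (lev L 0).card := by
    intro r
    symm
    refine Finset.card_bij (fun x _ => x + r • y) ?_ ?_ ?_
    · intro x hx
      rw [mem_lev] at hx ⊢
      simp [hx, hy]
    · intro a _ b _ hab
      exact add_right_cancel hab
    · intro b hb
      rw [mem_lev] at hb
      exact ⟨b - r • y, by rw [mem_lev]; simp [hb, hy], by simp⟩
  have h1 := sum_lev (L := L) (fun _ : V => 1)
  simp only [Finset.sum_const, smul_eq_mul, mul_one, Finset.card_univ, h.hV] at h1
  simp only [e, Finset.sum_const, Finset.card_univ, h.hF, smul_eq_mul] at h1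
  rw [e]; omega

lemma cnt_smul (h : CoreData L Q C G) {r : F} (hr : r ≠ 0) (x : V) :
    cnt L Q C G (r • x) = cnt L Q C G x := by
  unfold cnt
  symm
  refine Finset.card_bij (fun t _ => r * t) ?_ ?_ ?_
  · intro t ht
    simp only [Finset.mem_filter, Finset.mem_univ, true_and] at ht ⊢
    rw [h.sQ, h.sC, h.sG, map_smul, smul_eq_mul]
    linear_combination r ^ 4 * ht
  · intro a _ b _ hab
    exact mul_left_cancel₀ hr hab
  · intro t ht
    simp only [Finset.mem_filter, Finset.mem_univ, true_and] at ht
    rw [h.sQ, h.sC, h.sG, map_smul, smul_eq_mul] at ht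
    obtain ⟨t', rfl⟩ : ∃ t', t = r * t' := ⟨r⁻¹ * t, by field_simp⟩
    refine ⟨t', ?_, rfl⟩
    simp only [Finset.mem_filter, Finset.mem_univ, true_and]
    apply mul_left_cancel₀ (pow_ne_zero 4 hr)
    linear_combination ht

lemma sum_lev_eq (h : CoreData L Q C G) {r : F} (hr : r ≠ 0) :
    ∑ x ∈ lev L r, cnt L Q C G x = ∑ x ∈ lev L 1, cnt L Q C G x := by
  symm
  refine Finset.sum_bij (fun x _ => r • x) ?_ ?_ ?_ ?_
  · intro x hx
    rw [mem_lev] at hx ⊢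
    simp [hx]
  · intro a _ b _ hab
    exact smul_right_injective V hr hab
  · intro b hb
    rw [mem_lev] at hb
    exact ⟨r⁻¹ • b, by rw [mem_lev]; simp [hb, hr], by simp [smul_smul, hr]⟩
  · intro x _
    rw [h.cnt_smul hr]

lemma count1 (h : CoreData L Q C G) :
    19521 ≤ ∑ x ∈ lev L 0, cnt L Q C G x + 8 * ∑ x ∈ lev L 1, cnt L Q C G x := by
  refine h.hN.trans ?_
  change ∑ x, cnt L Q C G x ≤ _
  rw [sum_lev (L := L), ← Finset.add_sum_erase _ _ (Finset.mem_univ (0 : F))]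
  gcongr
  rw [Finset.sum_congr rfl (fun r hr => h.sum_lev_eq (Finset.ne_of_mem_erase hr))]
  rw [Finset.sum_const, Finset.card_erase_of_mem (Finset.mem_univ _), Finset.card_univ, h.hF]
  simp

/-- Exceptional directions. -/
def exc (L : V →ₗ[F] F) (Q C G : V → F) : Finset V :=
  (lev L 1).filter fun x => cnt L Q C G x ≠ 3

lemma cnt_le (x : V) (hx : x ∈ lev L 1) : cnt L Q C G x ≤ 3 := by
  rw [mem_lev] at hx
  unfold cnt
  simp only [hx, mul_one]
  exact cubic_count _ _ _

lemma count2 (h : CoreData L Q C G) :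
    ∑ x ∈ lev L 1, cnt L Q C G x + (exc L Q C G).card ≤ 2187 := by
  calc _ = ∑ x ∈ lev L 1, (cnt L Q C G x + if cnt L Q C G x ≠ 3 then 1 else 0) := by
        rw [Finset.sum_add_distrib, exc, Finset.card_filter]
    _ ≤ ∑ x ∈ lev L 1, 3 := by
        refine Finset.sum_le_sum fun x hx => ?_
        have := cnt_le (Q := Q) (C := C) (G := G) x hx
        split_ifs with hc <;> omega
    _ = 2187 := by rw [Finset.sum_const, h.card_lev]; norm_num

/-- Directions of lines through the base point contained in the hypersurface. -/
def base (L : V →ₗ[F] F) (Q C G : V → F) : Finset V :=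
  (lev L 0).filter fun x => Q x = 0 ∧ C x = 0 ∧ G x = 0

lemma mem_base {x : V} : x ∈ base L Q C G ↔ L x = 0 ∧ Q x = 0 ∧ C x = 0 ∧ G x = 0 := by
  rw [base, Finset.mem_filter, mem_lev]

lemma base_card (h : CoreData L Q C G) : 81 ≤ (base L Q C G).card := by
  have h1 := h.count1
  have h2 := h.count2
  have h3 : ∑ x ∈ lev L 0, cnt L Q C G x ≤ 1458 + 7 * (base L Q C G).card := by
    calc _ ≤ ∑ x ∈ lev L 0, (2 + if Q x = 0 ∧ C x = 0 ∧ G x = 0 then 7 else 0) := by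
          refine Finset.sum_le_sum fun x hx => ?_
          split_ifs with hc
          · exact (Finset.card_le_univ _).trans h.hF.le
          · rw [mem_lev] at hx
            unfold cnt
            simp only [hx, mul_zero, zero_add, add_zero]
            exact quad_count hc
      _ = _ := by
          rw [Finset.sum_add_distrib, Finset.sum_const, ← Finset.sum_filter, Finset.sum_const,
            h.card_lev, base]
          simp [mul_comm]
  omega

lemma smul_base (h : CoreData L Q C G) {b : V} (hb : b ∈ base L Q C G) (r : F) :
    r • b ∈ base L Q C G := by
  rw [mem_base] at hb ⊢
  obtain ⟨h1, h2, h3, h4⟩ := hb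
  refine ⟨by simp [h1], by simp [h.sQ, h2], by simp [h.sC, h3], by simp [h.sG, h4]⟩

lemma span_base (h : CoreData L Q C G) {d : V} (hd : L d = 0) :
    d ∈ Submodule.span F (base L Q C G : Set V) := by
  by_contra hdn
  set S := Submodule.span F (base L Q C G : Set V) with hS
  have hSL : S ≤ LinearMap.ker L := by
    rw [hS, Submodule.span_le]
    intro x hx
    exact (mem_base.mp hx).1
  have hlt : S < LinearMap.ker L :=
    lt_of_le_of_ne hSL (fun e => hdn (by rw [e]; exact hd))
  have hfr := Submodule.finrank_lt_finrank_of_lt hlt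
  have hcard : ∀ W : Submodule F V, Nat.card W = 9 ^ Module.finrank F W := by
    intro W
    have := Module.natCard_eq_pow_finrank (K := F) (V := W)
    rw [this, Nat.card_eq_fintype_card, h.hF]
  have hker : Nat.card (LinearMap.ker L) = 729 := by
    rw [← h.card_lev 0]
    exact Nat.subtype_card _ (fun x => by rw [mem_lev]; rfl)
  have h3 : Module.finrank F (LinearMap.ker L) = 3 := by
    have := hcard (LinearMap.ker L)
    rw [hker] at this
    exact Nat.pow_right_injective (le_refl 9 |>.trans' (by norm_num)) (this.symm.trans (by norm_num))
  rw [h3] at hfr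
  classical
  set SF : Finset V := Finset.univ.filter (fun x => x ∈ S) with hSF
  have hSFc : SF.card = 9 ^ Module.finrank F S := by
    rw [← hcard S]
    exact (Nat.subtype_card _ (fun x => by simp [hSF])).symm
  have hsub : base L Q C G ⊆ SF := fun x hx => by
    simp only [hSF, Finset.mem_filter, Finset.mem_univ, true_and]
    exact Submodule.subset_span hx
  have hbc := h.base_card
  have hle := Finset.card_le_card hsub
  have h2 : Module.finrank F S = 2 := by
    interval_cases hq : Module.finrank F S <;> simp_all <;> omega
  have heq : base L Q C G = SF := Finset.eq_of_subset_of_card_le hsub (by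
    rw [hSFc, h2]; omega)
  let B := Module.finBasisOfFinrankEq F S h2
  have hB : LinearIndependent F ![(B 0 : V), (B 1 : V)] := by
    have := B.linearIndependent.map' S.subtype (Submodule.ker_subtype S)
    have e : ![(B 0 : V), (B 1 : V)] = S.subtype ∘ B := by
      funext i
      fin_cases i <;> rfl
    rw [e]
    exact this
  obtain ⟨r, s, t, hne⟩ := h.hplane _ _ (hSL (B 0).2) (hSL (B 1).2) hB
  have hm : r • (B 0 : V) + s • (B 1 : V) ∈ base L Q C G := by
    rw [heq, hSF]
    simp only [Finset.mem_filter, Finset.mem_univ, true_and]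
    exact S.add_mem (S.smul_mem _ (B 0).2) (S.smul_mem _ (B 1).2)
  obtain ⟨-, q1, q2, q3⟩ := mem_base.mp hm
  apply hne
  rw [q1, q2, q3]
  ring

end CoreData

lemma LD.low {F V : Type} [Field F] [AddCommGroup V] [Module F V] {φ : V → F} {k : ℕ}
    (h : LD φ (k + 1)) (x : V) {d : V} (hd : φ d = 0) :
    ∃ P : Polynomial F, P.natDegree ≤ k ∧ ∀ r : F, P.eval r = φ (x + r • d) := by
  obtain ⟨P, h1, h2, h3⟩ := h x d
  refine ⟨P, ?_, h3⟩
  rw [Polynomial.natDegree_le_iff_coeff_eq_zero] at h1 ⊢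
  intro N hN
  rcases Nat.lt_or_ge (k + 1) N with hl | hl
  · exact h1 N hl
  · obtain rfl : N = k + 1 := by omega
    rw [h2, hd]

namespace CoreData
variable {F V : Type} [Field F] [Fintype F] [AddCommGroup V] [Module F V] [Fintype V]
    [DecidableEq F] [DecidableEq V] {L : V →ₗ[F] F} {Q C G : V → F}

lemma inner_le (h : CoreData L Q C G) {b x : V} (hb : b ∈ base L Q C G) (hb0 : b ≠ 0)
    (hx : L x = 0) (hxb : ¬ ∃ s : F, x = s • b) :
    ∑ r : F, cnt L Q C G (x + r • b) ≤ 27 := by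
  have hbb := hb
  obtain ⟨b0, b1, b2, b3⟩ := mem_base.mp hb
  obtain ⟨A, hA, eA⟩ := h.hQ.low x b1
  obtain ⟨B, hB, eB⟩ := h.hC.low x b2
  obtain ⟨D, hD, eD⟩ := h.hG.low x b3
  have key := biv_count h.hF A B D hA hB hD ?_
  · unfold cnt
    simp only [map_add, map_smul, hx, b0, smul_zero, add_zero, mul_zero, zero_add]
    simpa only [eA, eB, eD] using key
  · have hli : LinearIndependent F ![b, x] := by
      rw [LinearIndependent.pair_iff]
      intro s t hst
      by_cases ht : t = 0
      · subst ht
        rw [zero_smul, add_zero] at hst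
        exact ⟨(smul_eq_zero.mp hst).resolve_right hb0, rfl⟩
      · exfalso
        apply hxb
        refine ⟨-(t⁻¹ * s), ?_⟩
        have : t • x = -(s • b) := by rw [← add_eq_zero_iff_eq_neg, add_comm]; exact hst
        rw [neg_smul, mul_smul, ← smul_neg, ← this, smul_smul, inv_mul_cancel₀ ht, one_smul]
    obtain ⟨r, s, t, hne⟩ := h.hplane b x b0 hx hli
    by_cases hs : s = 0
    · exfalso
      apply hne
      obtain ⟨-, q1, q2, q3⟩ := mem_base.mp (h.smul_base hb r)
      rw [hs, zero_smul, add_zero, q1, q2, q3]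
      ring
    · refine ⟨s⁻¹ * r, s⁻¹ * t, ?_⟩
      rw [eA, eB, eD]
      have e : r • b + s • x = s • (x + (s⁻¹ * r) • b) := by
        rw [smul_add, smul_smul, mul_inv_cancel_left₀ hs, add_comm]
      rw [e, h.sQ, h.sC, h.sG] at hne
      intro h0
      apply hne
      have hh : t = s * (s⁻¹ * t) := by rw [mul_inv_cancel_left₀ hs]
      generalize s⁻¹ * t = u at *
      subst hh
      linear_combination s ^ 4 * h0

lemma N0_le (h : CoreData L Q C G) : ∑ x ∈ lev L 0, cnt L Q C G x ≤ 2241 := by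
  classical
  obtain ⟨b, hb, hb0⟩ := Finset.exists_mem_ne (by have := h.base_card; omega :
    1 < (base L Q C G).card) 0
  have hbL := (mem_base.mp hb).1
  have e1 : ∀ r : F, ∑ x ∈ lev L 0, cnt L Q C G (x + r • b) = ∑ x ∈ lev L 0, cnt L Q C G x := by
    intro r
    refine Finset.sum_equiv (Equiv.addRight (r • b)) ?_ ?_
    · intro x
      simp [mem_lev, hbL]
    · intro x _
      rfl
  have e2 : 9 * ∑ x ∈ lev L 0, cnt L Q C G x = ∑ x ∈ lev L 0, ∑ r : F, cnt L Q C G (x + r • b) := by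
    rw [Finset.sum_comm]
    simp only [e1]
    rw [Finset.sum_const, Finset.card_univ, h.hF, smul_eq_mul]
  have e3 : ∑ x ∈ lev L 0, ∑ r : F, cnt L Q C G (x + r • b) ≤
      ∑ x ∈ lev L 0, (27 + if ∃ s : F, x = s • b then 54 else 0) := by
    refine Finset.sum_le_sum fun x hx => ?_
    split_ifs with hc
    · calc ∑ r : F, cnt L Q C G (x + r • b) ≤ ∑ r : F, 9 :=
            Finset.sum_le_sum fun r _ => (Finset.card_le_univ _).trans h.hF.le
        _ ≤ _ := by rw [Finset.sum_const, Finset.card_univ, h.hF]; norm_num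
    · exact h.inner_le hb hb0 (mem_lev.mp hx) hc
  have e4 : ((lev L 0).filter fun x => ∃ s : F, x = s • b).card ≤ 9 := by
    calc _ ≤ (Finset.univ.image fun s : F => s • b).card := by
          apply Finset.card_le_card
          intro x hx
          rw [Finset.mem_filter] at hx
          obtain ⟨s, hs⟩ := hx.2
          rw [Finset.mem_image]
          exact ⟨s, Finset.mem_univ _, hs.symm⟩
      _ ≤ _ := Finset.card_image_le
      _ = 9 := by rw [Finset.card_univ, h.hF]
  rw [Finset.sum_add_distrib, Finset.sum_const, ← Finset.sum_filter, Finset.sum_const,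
    h.card_lev, smul_eq_mul, smul_eq_mul] at e3
  omega

lemma exc_card (h : CoreData L Q C G) : (exc L Q C G).card ≤ 27 := by
  have h1 := h.count1
  have h2 := h.count2
  have h3 := h.N0_le
  omega

lemma good (h : CoreData L Q C G) {x : V} (hx : L x = 1) (he : x ∉ exc L Q C G) :
    Q x * (Q x ^ 6 + Q x ^ 2 * C x ^ 2 - Q x ^ 3 * G x - C x ^ 3) = 0 ∧
      (Q x = 0 → C x ^ 4 = 1 ∧ G x ^ 3 = C x ^ 3 * G x) := by
  have h3 : cnt L Q C G x = 3 := by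
    by_contra hc
    exact he (Finset.mem_filter.mpr ⟨mem_lev.mpr hx, hc⟩)
  unfold cnt at h3
  rw [Finset.card_eq_three] at h3
  obtain ⟨a, b, c, hab, hac, hbc, hs⟩ := h3
  have key : ∀ t, t = a ∨ t = b ∨ t = c → t ^ 3 + Q x * t ^ 2 + C x * t + G x = 0 := by
    intro t ht
    have : t ∈ ({a, b, c} : Finset F) := by simpa using ht
    rw [← hs, Finset.mem_filter, hx] at this
    linear_combination this.2
  exact cubic_split h.hF hab hac hbc (key a (by simp)) (key b (by simp)) (key c (by simp))

/-- Points of the lines in direction `b` meeting `E`. -/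
def strip (E : Finset V) (b : V) : Finset V :=
  (E ×ˢ (Finset.univ : Finset F)).image fun p => p.1 + p.2 • b

lemma strip_card (h : CoreData L Q C G) (b : V) :
    (strip (F := F) (exc L Q C G) b).card ≤ 243 := by
  refine Finset.card_image_le.trans ?_
  rw [Finset.card_product, Finset.card_univ, h.hF]
  have := h.exc_card
  omega

lemma strip_not {E : Finset V} {b x : V} (hx : x ∉ strip (F := F) E b) (r : F) :
    x + r • b ∉ E := by
  intro he
  apply hx
  rw [strip, Finset.mem_image]
  exact ⟨(x + r • b, -r), Finset.mk_mem_product he (Finset.mem_univ _), by simp⟩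

lemma Qline (h : CoreData L Q C G) {b x : V} (hb : b ∈ base L Q C G) (hx : L x = 1)
    (hs : x ∉ strip (F := F) (exc L Q C G) b) : Q (x + b) = Q x := by
  obtain ⟨b0, b1, b2, b3⟩ := mem_base.mp hb
  obtain ⟨m, hm⟩ := h.hQ.d2 x b
  obtain ⟨s1, s2, hs2⟩ := h.hC.d3 x b
  obtain ⟨g1, g2, g3, hg⟩ := h.hG.d4 x b
  simp only [b1, b2, b3, zero_mul, add_zero] at hm hs2 hg
  have hgood := fun r : F => h.good (x := x + r • b) (by simp [hx, b0]) (strip_not hs r)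
  have := lineQ h.hF (Q x) m (C x) s1 s2 (G x) g1 g2 g3 ?_ ?_
  · have h1 := hm 1
    rw [one_smul, this] at h1
    rw [h1]; ring
  · intro r
    have := (hgood r).1
    rw [hm, hs2, hg] at this
    exact this
  · intro r h0 h1
    have := ((hgood r).2 (by rw [hm, h0])).1
    rw [hs2, h1] at this
    norm_num at this

lemma exists_pair (h : CoreData L Q C G) (S : Finset V) (hS : S.card ≤ 243) {x0 : V}
    (hx0 : L x0 = 1) : ∃ d, L d = 0 ∧ x0 + d ∉ S ∧ x0 + (2 : F) • d ∉ S := by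
  classical
  by_contra hcon
  push Not at hcon
  have h2 := two_ne h.hF
  have hsub : lev L 0 ⊆ (S.image fun z => z - x0) ∪ (S.image fun z => (2 : F)⁻¹ • (z - x0)) := by
    intro d hd
    rw [mem_lev] at hd
    rw [Finset.mem_union, Finset.mem_image, Finset.mem_image]
    by_cases h1 : x0 + d ∈ S
    · exact Or.inl ⟨_, h1, by simp⟩
    · exact Or.inr ⟨_, hcon d hd h1, by simp [smul_smul, h2]⟩
  have := Finset.card_le_card hsub
  have h3 := Finset.card_union_le (S.image fun z => z - x0) (S.image fun z => (2 : F)⁻¹ • (z - x0))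
  have h4 := Finset.card_image_le (s := S) (f := fun z => z - x0)
  have h5 := Finset.card_image_le (s := S) (f := fun z => (2 : F)⁻¹ • (z - x0))
  rw [h.card_lev] at this
  omega

lemma Qbase (h : CoreData L Q C G) {b x : V} (hb : b ∈ base L Q C G) (hx : L x = 1) :
    Q (x + b) = Q x := by
  obtain ⟨d, hd, h1, h2⟩ := h.exists_pair _ (h.strip_card b) hx
  have e1 := h.Qline hb (by simp [hx, hd]) h1
  have e2 := h.Qline hb (by simp [hx, hd]) h2
  obtain ⟨m, hm⟩ := h.hQ.d2 x d
  obtain ⟨m', hm'⟩ := h.hQ.d2 (x + b) d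
  have f1 := hm 1
  have f2 := hm 2
  have f1' := hm' 1
  have f2' := hm' 2
  rw [one_smul] at f1 f1'
  rw [show x + d + b = x + b + d by abel, f1, f1'] at e1
  rw [show x + (2 : F) • d + b = x + b + (2 : F) • d by abel, f2, f2'] at e2
  linear_combination 2 * e1 - e2

lemma Qconst (h : CoreData L Q C G) {d : V} (hd : L d = 0) :
    ∀ x, L x = 1 → Q (x + d) = Q x := by
  have hker : ∀ d ∈ Submodule.span F (base L Q C G : Set V), L d = 0 ∧
      ∀ x, L x = 1 → Q (x + d) = Q x := by
    intro d hd
    induction hd using Submodule.closure_induction with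
    | zero => simp
    | add a b _ _ ha hb =>
      refine ⟨by simp [ha.1, hb.1], fun x hx => ?_⟩
      rw [← add_assoc, hb.2 _ (by simp [hx, ha.1]), ha.2 _ hx]
    | smul_mem r a ha =>
      have := h.smul_base ha r
      exact ⟨(mem_base.mp this).1, fun x hx => h.Qbase this hx⟩
  exact (hker d (h.span_base hd)).2

end CoreData

namespace CoreData
variable {F V : Type} [Field F] [Fintype F] [AddCommGroup V] [Module F V] [Fintype V]
    [DecidableEq F] [DecidableEq V] {L : V →ₗ[F] F} {Q C G : V → F}

lemma Qker (h : CoreData L Q C G) {d : V} (hd : L d = 0) : Q d = 0 := by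
  obtain ⟨y, hy⟩ := h.hL
  obtain ⟨m, hm⟩ := h.hQ.d2 y d
  have e : ∀ r : F, Q (y + r • d) = Q y := fun r => h.Qconst (by simp [hd]) y hy
  have e1 := hm 1
  have e2 := hm 2
  rw [e] at e1 e2
  have : 2 * Q d = 0 := by linear_combination 2 * e1 - e2
  exact (mul_eq_zero.mp this).resolve_left (two_ne h.hF)

lemma exists_avoid (h : CoreData L Q C G) (r : F) (S : Finset V) (hS : S.card < 729) :
    ∃ x, L x = r ∧ x ∉ S := by
  by_contra hcon
  push Not at hcon
  have : lev L r ⊆ S := fun x hx => hcon x (mem_lev.mp hx)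
  have := Finset.card_le_card this
  rw [h.card_lev] at this
  omega

lemma exists_indep (h : CoreData L Q C G) :
    ∃ d1 d2 : V, L d1 = 0 ∧ L d2 = 0 ∧ LinearIndependent F ![d1, d2] := by
  obtain ⟨b, hb, hb0⟩ := h.exists_avoid 0 {0} (by simp)
  obtain ⟨x, hx, hxb⟩ := h.exists_avoid 0 (Finset.univ.image fun s : F => s • b)
    (lt_of_le_of_lt Finset.card_image_le (by rw [Finset.card_univ, h.hF]; norm_num))
  refine ⟨b, x, hb, hx, ?_⟩
  rw [Finset.mem_singleton] at hb0
  rw [LinearIndependent.pair_iff]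
  intro s t hst
  by_cases ht : t = 0
  · subst ht
    rw [zero_smul, add_zero] at hst
    exact ⟨(smul_eq_zero.mp hst).resolve_right hb0, rfl⟩
  · exfalso
    apply hxb
    rw [Finset.mem_image]
    refine ⟨-(t⁻¹ * s), Finset.mem_univ _, ?_⟩
    have : t • x = -(s • b) := by rw [← add_eq_zero_iff_eq_neg, add_comm]; exact hst
    rw [neg_smul, mul_smul, ← smul_neg, ← this, smul_smul, inv_mul_cancel₀ ht, one_smul]

lemma Qzero (h : CoreData L Q C G) {y : V} (hy : L y = 1) : Q y = 0 := by
  by_contra hk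
  have hQ : ∀ x, L x = 1 → Q x = Q y := by
    intro x hx
    have := h.Qconst (d := x - y) (by simp [hx, hy]) y hy
    rwa [add_sub_cancel] at this
  have key : ∀ d, L d = 0 → C d = 0 ∧ G d = 0 := by
    intro d hd
    obtain ⟨x, hx, hs⟩ := h.exists_avoid 1 (strip (F := F) (exc L Q C G) d)
      (by have := h.strip_card d; omega)
    obtain ⟨s1, s2, hs2⟩ := h.hC.d3 x d
    obtain ⟨g1, g2, g3, hg⟩ := h.hG.d4 x d
    refine lineK h.hF (Q y) (C x) s1 s2 (C d) (G x) g1 g2 g3 (G d) hk ?_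
    intro r
    have := (h.good (x := x + r • d) (by simp [hx, hd]) (strip_not hs r)).1
    rw [hQ _ (by simp [hx, hd]), hs2, hg] at this
    exact this
  obtain ⟨d1, d2, h1, h2, h12⟩ := h.exists_indep
  obtain ⟨r, s, t, hne⟩ := h.hplane d1 d2 h1 h2 h12
  have hL0 : L (r • d1 + s • d2) = 0 := by simp [h1, h2]
  apply hne
  rw [h.Qker hL0, (key _ hL0).1, (key _ hL0).2]
  ring

/-- Union of the lines joining `x` to the points of `E`. -/
def cone (E : Finset V) (x : V) : Finset V :=
  (E ×ˢ (Finset.univ : Finset F)).image fun p => x + p.2 • (p.1 - x)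

lemma cone_card (h : CoreData L Q C G) (x : V) :
    (cone (F := F) (exc L Q C G) x).card ≤ 243 := by
  refine Finset.card_image_le.trans ?_
  rw [Finset.card_product, Finset.card_univ, h.hF]
  have := h.exc_card
  omega

lemma cone_not {E : Finset V} {x z : V} (hz : z ∉ cone (F := F) E x) {r : F} (hr : r ≠ 0) :
    x + r • (z - x) ∉ E := by
  intro he
  apply hz
  rw [cone, Finset.mem_image]
  refine ⟨(x + r • (z - x), r⁻¹), Finset.mk_mem_product he (Finset.mem_univ _), ?_⟩
  simp [smul_smul, hr]

lemma Cgood (h : CoreData L Q C G) {x z : V} (hx : L x = 1) (hz : L z = 1)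
    (hxe : x ∉ exc L Q C G) (hzc : z ∉ cone (F := F) (exc L Q C G) x) : C z = C x := by
  obtain ⟨s1, s2, hs2⟩ := h.hC.d3 x (z - x)
  have hgood : ∀ r : F, C (x + r • (z - x)) ^ 4 = 1 := by
    intro r
    have hl : L (x + r • (z - x)) = 1 := by simp [hx, hz]
    refine ((h.good hl ?_).2 (h.Qzero hl)).1
    by_cases hr : r = 0
    · simpa [hr] using hxe
    · exact cone_not hzc hr
  obtain ⟨a1, a2, a3⟩ := lineC h.hF (C x) s1 s2 (C (z - x)) (fun r => by rw [← hs2]; exact hgood r)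
  have := hs2 1
  rw [one_smul, add_sub_cancel, a1, a2, a3] at this
  rw [this]; ring

lemma Cconst (h : CoreData L Q C G) :
    ∃ c : F, c ^ 4 = 1 ∧ ∀ x, L x = 1 → C x = c ∧ G x ^ 3 = c ^ 3 * G x := by
  obtain ⟨x1, hx1, he1⟩ := h.exists_avoid 1 (exc L Q C G) (by have := h.exc_card; omega)
  have hC1 : ∀ x, L x = 1 → x ∉ exc L Q C G → C x = C x1 := by
    intro x hx hxe
    obtain ⟨z, hz, hzc⟩ := h.exists_avoid 1
      (cone (F := F) (exc L Q C G) x ∪ cone (F := F) (exc L Q C G) x1) (by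
        have a1 := h.cone_card x
        have a2 := h.cone_card x1
        have a3 := Finset.card_union_le (cone (F := F) (exc L Q C G) x)
          (cone (F := F) (exc L Q C G) x1)
        omega)
    rw [Finset.mem_union, not_or] at hzc
    rw [← h.Cgood hx hz hxe hzc.1, h.Cgood hx1 hz he1 hzc.2]
  refine ⟨C x1, ((h.good hx1 he1).2 (h.Qzero hx1)).1, ?_⟩
  intro x hx
  obtain ⟨z, hz, hzc⟩ := h.exists_avoid 1 (cone (F := F) (exc L Q C G) x) (by
    have := h.cone_card x; omega)
  have hl : ∀ r : F, L (x + r • (z - x)) = 1 := fun r => by simp [hx, hz]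
  obtain ⟨s1, s2, hs2⟩ := h.hC.d3 x (z - x)
  obtain ⟨g1, g2, g3, hg⟩ := h.hG.d4 x (z - x)
  constructor
  · have := (poly9 h.hF 0 (C x - C x1) s1 s2 (C (z - x)) 0 0 0 0 (by
      intro r
      by_cases hr : r = 0
      · rw [hr]; ring
      have := hs2 r
      rw [hC1 _ (hl r) (cone_not hzc hr)] at this
      linear_combination -r * this)).2.1
    exact sub_eq_zero.mp this
  · refine lineG h.hF _ (G x) g1 g2 g3 (G (z - x)) ?_
    intro r hr
    rw [← hg, ← hC1 _ (hl r) (cone_not hzc hr)]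
    exact ((h.good (hl r) (cone_not hzc hr)).2 (h.Qzero (hl r))).2

theorem main (h : CoreData L Q C G) : ∃ μ : F, μ ≠ 0 ∧ ∀ (t : F) (x : V),
    (μ * (t ^ 3 * L x + t ^ 2 * Q x + t * C x + G x)) ^ 3 =
      μ * (t ^ 3 * L x + t ^ 2 * Q x + t * C x + G x) := by
  have h3 := char_three h.hF
  have c3 : ∀ x y : F, (x + y) ^ 3 = x ^ 3 + y ^ 3 := fun x y => by
    linear_combination (x ^ 2 * y + x * y ^ 2) * h3
  obtain ⟨c, hc4, hc⟩ := h.Cconst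
  have hc0 : c ≠ 0 := by rintro rfl; norm_num at hc4
  have hchar : ringChar F ≠ 2 := by
    intro h2
    apply two_ne h.hF
    have := ringChar.Nat.cast_ringChar (R := F)
    rw [h2] at this
    exact_mod_cast this
  obtain ⟨μ, hμ⟩ := (FiniteField.isSquare_iff hchar hc0).mpr (by rw [h.hF]; exact hc4)
  have hμ0 : μ ≠ 0 := by rintro rfl; simp at hμ; exact hc0 hμ
  have h9 := pow_nine h.hF μ
  have A1 : ∀ (t : F) (x : V), L x = 1 →
      (μ * (t ^ 3 * L x + t ^ 2 * Q x + t * C x + G x)) ^ 3 =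
      μ * (t ^ 3 * L x + t ^ 2 * Q x + t * C x + G x) := by
    intro t x hx
    obtain ⟨e1, e2⟩ := hc x hx
    rw [hx, h.Qzero hx, e1, mul_pow, c3, c3, c3, mul_pow t c 3, e2, hμ]
    have t9 := pow_nine h.hF t
    linear_combination μ ^ 3 * t9 + (t ^ 3 + G x) * h9
  have A2 : ∀ (t : F) (x : V), L x ≠ 0 →
      (μ * (t ^ 3 * L x + t ^ 2 * Q x + t * C x + G x)) ^ 3 =
      μ * (t ^ 3 * L x + t ^ 2 * Q x + t * C x + G x) := by
    intro t x hx
    set r := L x with hr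
    have ex : x = r • (r⁻¹ • x) := by rw [smul_smul, mul_inv_cancel₀ hx, one_smul]
    have et : t = r * (r⁻¹ * t) := by rw [mul_inv_cancel_left₀ hx]
    have hl : L (r⁻¹ • x) = 1 := by simp [← hr, hx]
    have key := A1 (r⁻¹ * t) _ hl
    rw [hl] at key
    rw [ex, h.sQ, h.sC, h.sG]
    generalize r⁻¹ • x = x' at *
    generalize r⁻¹ * t = t' at *
    subst et
    have r9 := pow_nine h.hF r
    generalize Q x' = q at *
    generalize C x' = c' at *
    generalize G x' = g at *
    have e : (r * t') ^ 3 * r + (r * t') ^ 2 * (r ^ 2 * q) + r * t' * (r ^ 3 * c') + r ^ 4 * g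
      = r ^ 4 * (t' ^ 3 * 1 + t' ^ 2 * q + t' * c' + g) := by ring
    rw [e]
    generalize t' ^ 3 * 1 + t' ^ 2 * q + t' * c' + g = w at *
    linear_combination r ^ 12 * key + r ^ 3 * μ * w * r9
  refine ⟨μ, hμ0, fun t x => ?_⟩
  by_cases hx : L x = 0
  swap
  · exact A2 t x hx
  obtain ⟨y, hy⟩ := h.hL
  obtain ⟨m1, hm⟩ := h.hQ.d2 x y
  obtain ⟨s1, s2, hs⟩ := h.hC.d3 x y
  obtain ⟨g1, g2, g3, hg⟩ := h.hG.d4 x y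
  have := lineG h.hF 1 (μ * (t ^ 2 * Q x + t * C x + G x))
    (μ * (t ^ 3 + t ^ 2 * m1 + t * s1 + g1)) (μ * (t ^ 2 * Q y + t * s2 + g2))
    (μ * (t * C y + g3)) (μ * G y) ?_
  · rw [hx]
    linear_combination this
  · intro r hr
    have := A2 t (x + r • y) (by simp [hx, hy, hr])
    rw [hm, hs, hg, map_add, map_smul, hx, hy, smul_eq_mul] at this
    have e : μ * (t ^ 2 * Q x + t * C x + G x) + μ * (t ^ 3 + t ^ 2 * m1 + t * s1 + g1) * r +
      μ * (t ^ 2 * Q y + t * s2 + g2) * r ^ 2 + μ * (t * C y + g3) * r ^ 3 + μ * G y * r ^ 4 =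
      μ * (t ^ 3 * (0 + r * 1) + t ^ 2 * (Q x + m1 * r + Q y * r ^ 2) +
      t * (C x + s1 * r + s2 * r ^ 2 + C y * r ^ 3) +
      (G x + g1 * r + g2 * r ^ 2 + g3 * r ^ 3 + G y * r ^ 4)) := by ring
    rw [e, one_mul, this]

end CoreData

section Outer
variable {F : Type} [Field F]

lemma eval_smul_hom {n k : ℕ} {p : MvPolynomial (Fin n) F} (hp : p.IsHomogeneous k) (r : F)
    (v : Fin n → F) : MvPolynomial.eval (r • v) p = r ^ k * MvPolynomial.eval v p := by
  rw [MvPolynomial.eval_eq', MvPolynomial.eval_eq', Finset.mul_sum]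
  refine Finset.sum_congr rfl fun d hd => ?_
  have hk : ∑ i, d i = k := by
    have := hp.degree_eq_sum_deg_support hd
    rw [this]
    exact (Finset.sum_subset (Finset.subset_univ _) (fun i _ hi => by simpa using hi)).symm
  simp only [Pi.smul_apply, smul_eq_mul, mul_pow]
  rw [Finset.prod_mul_distrib, Finset.prod_pow_eq_pow_sum, hk]
  ring

lemma exists_equiv {u : Fin 5 → F} (hu : u ≠ 0) :
    ∃ e : (Fin 5 → F) ≃ₗ[F] (Fin 5 → F), e (Fin.cons 1 0) = u := by
  have h0 : (Fin.cons 1 0 : Fin 5 → F) ≠ 0 := by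
    intro h
    have := congrFun h 0
    simp at this
  let f := (LinearEquiv.toSpanNonzeroSingleton F _ _ h0).symm ≪≫ₗ
    (LinearEquiv.toSpanNonzeroSingleton F _ _ hu)
  obtain ⟨g, hg⟩ := Submodule.exists_linearEquiv_restrict_eq f
  refine ⟨g, ?_⟩
  have := hg ⟨Fin.cons 1 0, Submodule.mem_span_singleton_self _⟩
  refine this.symm.trans ?_
  simp only [f, LinearEquiv.trans_apply]
  have e : (LinearEquiv.toSpanNonzeroSingleton F _ _ h0).symm
      ⟨Fin.cons 1 0, Submodule.mem_span_singleton_self _⟩ = 1 := by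
    rw [LinearEquiv.symm_apply_eq]
    ext1
    simp
  rw [e]
  simp

lemma noplane {f : MvPolynomial (Fin 5) F}
    (h : ¬ ∃ W : Submodule F (Fin 5 → F), Module.finrank F W = 3 ∧
      ∀ v ∈ W, MvPolynomial.eval v f = 0)
    (a b c : Fin 5 → F) (hli : LinearIndependent F ![a, b, c]) :
    ∃ r s t : F, MvPolynomial.eval (r • a + s • b + t • c) f ≠ 0 := by
  by_contra hcon
  push Not at hcon
  apply h
  refine ⟨Submodule.span F (Set.range ![a, b, c]), ?_, ?_⟩
  · rw [finrank_span_eq_card hli]; simp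
  · intro v hv
    rw [Submodule.mem_span_range_iff_exists_fun] at hv
    obtain ⟨w, rfl⟩ := hv
    rw [Fin.sum_univ_three]
    exact hcon _ _ _

variable [Fintype F]

lemma sing_absurd (hF : Fintype.card F = 9) {a b c b' c' x y : F} (ha : a ≠ 0) (hx : x ≠ 0)
    (hy : y ≠ 0) (hxy : x ≠ y) (h1 : b * x ^ 2 + c * x ^ 3 + a * x ^ 4 = 0)
    (h2 : b * y ^ 2 + c * y ^ 3 + a * y ^ 4 = 0)
    (h : ∀ r : F, b * (x + r) ^ 2 + c * (x + r) ^ 3 + a * (x + r) ^ 4 =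
      b' * r ^ 2 + c' * r ^ 3 + a * r ^ 4) : False := by
  have e1 := (poly9 hF (b * x ^ 2 + c * x ^ 3 + a * x ^ 4) (2 * b * x + 3 * c * x ^ 2 + 4 * a * x ^ 3)
    (b + 3 * c * x + 6 * a * x ^ 2 - b') (c + 4 * a * x - c') 0 0 0 0 0 (by
      intro r
      linear_combination h r)).2.1
  have f1 : b + c * x + a * x ^ 2 = 0 := by
    apply mul_left_cancel₀ (pow_ne_zero 2 hx)
    linear_combination h1
  have f2 : b + c * y + a * y ^ 2 = 0 := by
    apply mul_left_cancel₀ (pow_ne_zero 2 hy)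
    linear_combination h2
  have f3 : c + a * (x + y) = 0 := by
    apply mul_left_cancel₀ (sub_ne_zero.mpr hxy)
    linear_combination f1 - f2
  have : a * x ^ 2 * (x - y) = 0 := by
    linear_combination e1 - 2 * x * f1 - x ^ 2 * f3
  simp [ha, hx, sub_eq_zero, hxy] at this

/-- Singularity of a point of the quartic. -/
def IsSing (f : MvPolynomial (Fin 5) F) (u : Fin 5 → F) : Prop :=
  ∀ v, ∃ b c, ∀ r : F, MvPolynomial.eval (u + r • v) f =
    b * r ^ 2 + c * r ^ 3 + MvPolynomial.eval v f * r ^ 4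

lemma exists_ne_zero (hF : Fintype.card F = 9) {f : MvPolynomial (Fin 5) F} (hf0 : f ≠ 0)
    (hf : f.IsHomogeneous 4) : ∃ v, MvPolynomial.eval v f ≠ 0 := by
  by_contra hcon
  push Not at hcon
  refine hf0 (hf.eq_zero_of_forall_eval_eq_zero_of_le_card hcon ?_)
  rw [Cardinal.mk_fintype, hF]
  norm_num

lemma exists_nonsing (hF : Fintype.card F = 9) [DecidableEq F] {f : MvPolynomial (Fin 5) F}
    (hf0 : f ≠ 0) (hf : f.IsHomogeneous 4)
    (hN : 19521 ≤ (Finset.univ.filter fun v => MvPolynomial.eval v f = 0).card) :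
    ∃ u, MvPolynomial.eval u f = 0 ∧ ¬ IsSing f u := by
  by_contra hcon
  push Not at hcon
  obtain ⟨v, hv⟩ := exists_ne_zero hF hf0 hf
  have h2 : ∀ w, (Finset.univ.filter fun r : F => MvPolynomial.eval (w + r • v) f = 0).card ≤ 2 := by
    intro w
    by_contra hc
    push Not at hc
    rw [Finset.two_lt_card] at hc
    obtain ⟨p, hp, q, hq, s, hs, hpq, hps, hqs⟩ := hc
    simp only [Finset.mem_filter, Finset.mem_univ, true_and] at hp hq hs
    obtain ⟨b, c, hbc⟩ := hcon _ hp v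
    obtain ⟨b', c', hbc'⟩ := hcon _ hq v
    have e : ∀ (a r : F), w + a • v + r • v = w + (a + r) • v := fun a r => by
      rw [add_smul, add_assoc]
    simp only [e] at hbc hbc'
    refine sing_absurd hF (x := q - p) (y := s - p) hv (sub_ne_zero.mpr hpq.symm)
      (sub_ne_zero.mpr hps.symm) (fun h => hqs (sub_left_injective h)) ?_ ?_ (b := b) (c := c)
      (b' := b') (c' := c') ?_
    · rw [← hbc, add_sub_cancel, hq]
    · rw [← hbc, add_sub_cancel, hs]
    · intro r
      rw [← hbc, ← hbc']
      rw [show p + (q - p + r) = q + r by ring]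
  have e1 : ∑ w : Fin 5 → F,
      (Finset.univ.filter fun r : F => MvPolynomial.eval (w + r • v) f = 0).card ≤ 118098 := by
    refine (Finset.sum_le_sum fun w _ => h2 w).trans ?_
    rw [Finset.sum_const, Finset.card_univ, Fintype.card_fun, hF]
    simp
  simp only [Finset.card_filter] at e1
  rw [Finset.sum_comm] at e1
  have e2 : ∀ r : F, (∑ w : Fin 5 → F, if MvPolynomial.eval (w + r • v) f = 0 then 1 else 0) =
      (Finset.univ.filter fun v => MvPolynomial.eval v f = 0).card := by
    intro r
    rw [Finset.card_filter]
    exact Fintype.sum_equiv (Equiv.addRight (r • v)) _ _ (fun w => rfl)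
  simp only [e2] at e1
  rw [Finset.sum_const, Finset.card_univ, hF, smul_eq_mul] at e1
  omega

lemma count_zeros (hF : Fintype.card F = 9) [DecidableEq F] {f : MvPolynomial (Fin 5) F}
    (hf : f.IsHomogeneous 4)
    (hX : {P : Projectivization F (Fin 5 → F) | MvPolynomial.eval P.rep f = 0}.ncard = 2440) :
    19521 ≤ (Finset.univ.filter fun v => MvPolynomial.eval v f = 0).card := by
  classical
  set X := {P : Projectivization F (Fin 5 → F) | MvPolynomial.eval P.rep f = 0} with hXd
  have hfin : X.Finite := Set.finite_of_ncard_pos (by omega)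
  rw [Set.ncard_eq_toFinset_card X hfin] at hX
  set S := Finset.univ.filter fun v : Fin 5 → F => MvPolynomial.eval v f = 0 with hS
  have h0 : (0 : Fin 5 → F) ∈ S := by
    simp only [hS, Finset.mem_filter, Finset.mem_univ, true_and]
    have := eval_smul_hom hf 0 0
    rw [zero_smul] at this
    rw [this]
    ring
  have hle : (hfin.toFinset ×ˢ (Finset.univ : Finset Fˣ)).card ≤ (S.erase 0).card := by
    refine Finset.card_le_card_of_injOn (fun p => (p.2 : F) • p.1.rep) ?_ ?_
    · intro p hp
      have hp1 := (Finset.mem_product.mp hp).1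
      rw [Set.Finite.mem_toFinset] at hp1
      have hp2 : MvPolynomial.eval p.1.rep f = 0 := hp1
      rw [Finset.mem_coe, Finset.mem_erase]
      refine ⟨smul_ne_zero p.2.ne_zero p.1.rep_nonzero, ?_⟩
      simp only [hS, Finset.mem_filter, Finset.mem_univ, true_and]
      rw [eval_smul_hom hf, hp2, mul_zero]
    · rintro ⟨P, r⟩ - ⟨P', r'⟩ - hpp
      simp only at hpp
      have hP : P = P' := by
        rw [← P.mk_rep, ← P'.mk_rep, Projectivization.mk_eq_mk_iff]
        refine ⟨r⁻¹ * r', ?_⟩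
        rw [mul_smul]
        change r⁻¹ • ((r' : F) • P'.rep) = P.rep
        rw [← hpp]
        exact inv_smul_smul r P.rep
      subst hP
      have := smul_left_injective F P.rep_nonzero hpp
      rw [Units.ext this]
  rw [Finset.card_product, hX, Finset.card_univ, Fintype.card_units, hF,
    Finset.card_erase_of_mem h0] at hle
  omega

end Outer

section Reduce
variable {F : Type} [Field F]

/-- Linear substitution in a polynomial. -/
noncomputable def subst (e : (Fin 5 → F) ≃ₗ[F] (Fin 5 → F)) (f : MvPolynomial (Fin 5) F) :
    MvPolynomial (Fin 5) F :=
  MvPolynomial.aeval (fun i => ∑ j, MvPolynomial.C (e (fun k => if j = k then 1 else 0) i) *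
    MvPolynomial.X j) f

lemma subst_eval (e : (Fin 5 → F) ≃ₗ[F] (Fin 5 → F)) (f : MvPolynomial (Fin 5) F)
    (v : Fin 5 → F) : MvPolynomial.eval v (subst e f) = MvPolynomial.eval (e v) f := by
  unfold subst
  rw [← MvPolynomial.coe_aeval_eq_eval, ← MvPolynomial.coe_aeval_eq_eval]
  change MvPolynomial.aeval v _ = MvPolynomial.aeval (e v) f
  rw [MvPolynomial.comp_aeval_apply]
  congr 2
  funext i
  have := LinearMap.pi_apply_eq_sum_univ e.toLinearMap v
  have h2 := congrFun this i
  simp only [LinearEquiv.coe_coe] at h2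
  rw [h2, Finset.sum_apply, map_sum]
  refine Finset.sum_congr rfl fun j _ => ?_
  simp [mul_comm]

lemma subst_hom (e : (Fin 5 → F) ≃ₗ[F] (Fin 5 → F)) {f : MvPolynomial (Fin 5) F}
    (hf : f.IsHomogeneous 4) : (subst e f).IsHomogeneous 4 := by
  have := hf.aeval (fun i => ∑ j, MvPolynomial.C (e (fun k => if j = k then 1 else 0) i) *
    MvPolynomial.X j) (n := 1) (fun i => MvPolynomial.IsHomogeneous.sum _ _ _
      (fun j _ => MvPolynomial.isHomogeneous_C_mul_X _ _))
  rw [one_mul] at this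
  exact this

lemma expand {g : MvPolynomial (Fin 5) F} (hg : g.IsHomogeneous 4)
    (h0 : MvPolynomial.eval (Fin.cons 1 0) g = 0) :
    ∃ (L : (Fin 4 → F) →ₗ[F] F) (q c d : MvPolynomial (Fin 4) F), q.IsHomogeneous 2 ∧
      c.IsHomogeneous 3 ∧ d.IsHomogeneous 4 ∧ ∀ (t : F) (x : Fin 4 → F),
      MvPolynomial.eval (Fin.cons t x) g = t ^ 3 * L x + t ^ 2 * MvPolynomial.eval x q +
        t * MvPolynomial.eval x c + MvPolynomial.eval x d := by
  set p := MvPolynomial.finSuccEquiv F 4 g with hp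
  have hom := fun i j hij => hg.finSuccEquiv_coeff_isHomogeneous i j hij
  rw [← hp] at hom
  have H4 := hom 4 0 rfl
  have H3 := hom 3 1 rfl
  have H2 := hom 2 2 rfl
  have H1 := hom 1 3 rfl
  have H0 := hom 0 4 rfl
  have hdeg : p.natDegree ≤ 4 := by
    rw [hp, MvPolynomial.natDegree_finSuccEquiv]
    exact (MvPolynomial.degreeOf_le_totalDegree _ _).trans hg.totalDegree_le
  have hev : ∀ (t : F) (x : Fin 4 → F), MvPolynomial.eval (Fin.cons t x) g =
      MvPolynomial.eval x (p.coeff 0) + MvPolynomial.eval x (p.coeff 1) * t +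
      MvPolynomial.eval x (p.coeff 2) * t ^ 2 + MvPolynomial.eval x (p.coeff 3) * t ^ 3 +
      MvPolynomial.eval x (p.coeff 4) * t ^ 4 := by
    intro t x
    rw [MvPolynomial.eval_eq_eval_mv_eval', ← hp, Polynomial.eval_eq_sum_range' (n := 5)
      (lt_of_le_of_lt Polynomial.natDegree_map_le (by omega))]
    simp [Finset.sum_range_succ]
  have z : ∀ (k : ℕ) (r : MvPolynomial (Fin 4) F), r.IsHomogeneous (k + 1) →
      MvPolynomial.eval 0 r = 0 := by
    intro k r hr
    have := eval_smul_hom hr 0 0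
    rw [zero_smul] at this
    rw [this]
    simp
  have e4 : ∀ x, MvPolynomial.eval x (p.coeff 4) = 0 := by
    intro x
    have := (LD.eval H4).d0 x 0
    rw [this]
    have h1 := hev 1 0
    rw [h0, z 0 _ H3, z 1 _ H2, z 2 _ H1, z 3 _ H0] at h1
    linear_combination -h1
  refine ⟨⟨⟨fun x => MvPolynomial.eval x (p.coeff 3), ?_⟩, ?_⟩, p.coeff 2, p.coeff 1, p.coeff 0,
    H2, H1, H0, ?_⟩
  · intro x y
    have := (LD.eval H3).d1 x y 1
    simpa using this
  · intro r x
    simp [eval_smul_hom H3]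
  · intro t x
    rw [hev, e4]
    simp only [LinearMap.coe_mk, AddHom.coe_mk]
    ring

variable [Fintype F]

lemma reduce (hF : Fintype.card F = 9) {f : MvPolynomial (Fin 5) F}
    (hf0 : f ≠ 0) (hf : f.IsHomogeneous 4) [DecidableEq F]
    (hN : 19521 ≤ (Finset.univ.filter fun v => MvPolynomial.eval v f = 0).card)
    (hnp : ∀ a b c : Fin 5 → F, LinearIndependent F ![a, b, c] →
      ∃ r s t : F, MvPolynomial.eval (r • a + s • b + t • c) f ≠ 0) :
    ∃ μ : F, μ ≠ 0 ∧ ∀ v, (μ * MvPolynomial.eval v f) ^ 3 = μ * MvPolynomial.eval v f := by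
  obtain ⟨u, hu, hns⟩ := exists_nonsing hF hf0 hf hN
  have hu0 : u ≠ 0 := by
    rintro rfl
    apply hns
    intro v
    refine ⟨0, 0, fun r => ?_⟩
    rw [zero_add, eval_smul_hom hf]
    ring
  obtain ⟨e, he⟩ := exists_equiv hu0
  have hge := subst_eval e f
  obtain ⟨L, q, c, d, hq, hc, hd, hexp⟩ := expand (subst_hom e hf) (by rw [hge, he, hu])
  have hcons : ∀ (r t : F) (x : Fin 4 → F), u + r • e (Fin.cons t x) =
      e (Fin.cons (1 + r * t) (r • x)) := by
    intro r t x
    rw [← he, ← map_smul, ← map_add]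
    congr 1
    funext i
    refine Fin.cases ?_ (fun j => ?_) i <;> simp
  have hsplit : ∀ w : Fin 5 → F, w = Fin.cons (w 0) (Fin.tail w) := fun w =>
    (Fin.cons_self_tail w).symm
  have core : CoreData L (fun x => MvPolynomial.eval x q) (fun x => MvPolynomial.eval x c)
      (fun x => MvPolynomial.eval x d) := by
    refine ⟨hF, by simp [hF], ?_, LD.eval hq, LD.eval hc, LD.eval hd, eval_smul_hom hq,
      eval_smul_hom hc, eval_smul_hom hd, ?_, ?_⟩
    · by_cases hL : ∃ x, L x ≠ 0
      · obtain ⟨x, hx⟩ := hL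
        exact ⟨(L x)⁻¹ • x, by simp [hx]⟩
      · exfalso
        push Not at hL
        apply hns
        intro v
        obtain ⟨w, rfl⟩ := e.surjective v
        rw [hsplit w]
        generalize w 0 = t
        generalize Fin.tail w = x
        refine ⟨MvPolynomial.eval x q, 2 * t * MvPolynomial.eval x q + MvPolynomial.eval x c, ?_⟩
        intro r
        rw [hcons, ← hge, ← hge, hexp, hexp, eval_smul_hom hq, eval_smul_hom hc, eval_smul_hom hd,
          hL, hL]
        ring
    · refine hN.trans (le_of_eq ?_)
      simp only [← hexp, hge, Finset.card_filter]
      rw [← Fintype.sum_equiv e.toEquiv (fun w => if MvPolynomial.eval (e w) f = 0 then 1 else 0) _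
        (fun w => rfl)]
      rw [← Fintype.sum_equiv (Fin.consEquiv (fun _ : Fin 5 => F))
        (fun w => if MvPolynomial.eval (e (Fin.cons w.1 w.2)) f = 0 then 1 else 0) _
        (fun w => rfl)]
      rw [Fintype.sum_prod_type_right]
    · intro d1 d2 h1 h2 h12
      have hli : LinearIndependent F ![u, e (Fin.cons 0 d1), e (Fin.cons 0 d2)] := by
        rw [Fintype.linearIndependent_iff]
        intro g hg
        rw [Fin.sum_univ_three] at hg
        have e1 : g 0 • u + g 1 • e (Fin.cons 0 d1) + g 2 • e (Fin.cons 0 d2) =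
            e (Fin.cons (g 0) (g 1 • d1 + g 2 • d2)) := by
          rw [← he, ← map_smul, ← map_smul, ← map_smul, ← map_add, ← map_add]
          congr 1
          funext i
          refine Fin.cases ?_ (fun j => ?_) i <;> simp
        have hg' : e (Fin.cons (g 0) (g 1 • d1 + g 2 • d2)) = 0 := e1.symm.trans hg
        rw [LinearEquiv.map_eq_zero_iff] at hg'
        have g0 : g 0 = 0 := by simpa using congrFun hg' 0
        have g12 : g 1 • d1 + g 2 • d2 = 0 := by
          funext j
          simpa using congrFun hg' j.succ
        obtain ⟨g1, g2⟩ := LinearIndependent.pair_iff.mp h12 _ _ g12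
        intro i
        fin_cases i
        · exact g0
        · exact g1
        · exact g2
      obtain ⟨r, s, t, hne⟩ := hnp u (e (Fin.cons 0 d1)) (e (Fin.cons 0 d2)) hli
      refine ⟨s, t, r, ?_⟩
      have e1 : r • u + s • e (Fin.cons 0 d1) + t • e (Fin.cons 0 d2) =
          e (Fin.cons r (s • d1 + t • d2)) := by
        rw [← he, ← map_smul, ← map_smul, ← map_smul, ← map_add, ← map_add]
        congr 1
        funext i
        refine Fin.cases ?_ (fun j => ?_) i <;> simp
      rw [e1, ← hge, hexp] at hne
      simpa [h1, h2] using hne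
  obtain ⟨μ, hμ, hall⟩ := core.main
  refine ⟨μ, hμ, fun v => ?_⟩
  obtain ⟨w, rfl⟩ := e.surjective v
  rw [hsplit w, ← hge, hexp]
  exact hall _ _

end Reduce

section Coeffs
variable {F : Type} [Field F] [Fintype F]

/-- Exponent of the reduction of `(x ^ n) ^ 3` modulo `x ^ 9 = x`. -/
def red3 (n : ℕ) : ℕ := if n ≤ 2 then 3 * n else 3 * n - 8

lemma red3_zero : red3 0 = 0 := rfl

lemma red3_inj : Function.Injective red3 := by
  intro a b h
  unfold red3 at h
  split_ifs at h <;> omega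

lemma pow_red3 (hF : Fintype.card F = 9) (x : F) (n : ℕ) : x ^ red3 n = (x ^ n) ^ 3 := by
  unfold red3
  split_ifs with h
  · rw [← pow_mul, mul_comm]
  · obtain ⟨k, rfl⟩ : ∃ k, n = k + 3 := ⟨n - 3, by omega⟩
    have h9 := pow_nine hF x
    rw [show 3 * (k + 3) - 8 = 3 * k + 1 by omega, ← pow_mul, show (k + 3) * 3 = 3 * k + 9 by ring,
      pow_add, pow_add, h9, pow_one]

/-- Action of cubing on exponents. -/
noncomputable def redE (e : Fin 5 →₀ ℕ) : Fin 5 →₀ ℕ := e.mapRange red3 red3_zero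

lemma redE_inj : Function.Injective redE := Finsupp.mapRange_injective _ red3_zero red3_inj

lemma cube_coeff (hF : Fintype.card F = 9) {h : MvPolynomial (Fin 5) F} (hh : h.IsHomogeneous 4)
    (hv : ∀ v, MvPolynomial.eval v h ^ 3 = MvPolynomial.eval v h) (e : Fin 5 →₀ ℕ) :
    MvPolynomial.coeff (redE e) h = MvPolynomial.coeff e h ^ 3 := by
  classical
  have : Fact (Nat.Prime 3) := ⟨Nat.prime_three⟩
  have : CharP F 3 := (CharP.charP_iff_prime_eq_zero Nat.prime_three).mpr
    (by exact_mod_cast char_three hF)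
  have hle : ∀ e ∈ h.support, ∀ i, e i ≤ 4 := by
    intro e he i
    exact (MvPolynomial.monomial_le_degreeOf i he).trans
      ((MvPolynomial.degreeOf_le_totalDegree _ _).trans hh.totalDegree_le)
  set h3 : MvPolynomial (Fin 5) F := ∑ e ∈ h.support,
    MvPolynomial.monomial (redE e) (MvPolynomial.coeff e h ^ 3) with hh3
  have heq : h3 - h = 0 := by
    apply MvPolynomial.eq_zero_of_eval_eq_zero
    · intro v
      rw [map_sub, ← hv v, MvPolynomial.eval_eq' v h, sum_pow_char 3, hh3, map_sum, sub_eq_zero]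
      refine Finset.sum_congr rfl fun e _ => ?_
      rw [MvPolynomial.eval_monomial, mul_pow, ← Finset.prod_pow,
        Finsupp.prod_fintype _ _ (fun i => pow_zero _)]
      congr 1
      refine Finset.prod_congr rfl fun i _ => ?_
      rw [← pow_red3 hF]
      rfl
    · rw [hF]
      apply Submodule.sub_mem
      · apply Submodule.sum_mem
        intro e he
        rw [MvPolynomial.mem_restrictDegree]
        intro s hs i
        have := MvPolynomial.support_monomial_subset hs
        rw [Finset.mem_singleton] at this
        subst this
        have h4 := hle e he i
        change red3 (e i) ≤ _
        unfold red3
        split_ifs <;> omega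
      · rw [MvPolynomial.mem_restrictDegree]
        intro s hs i
        have := hle s hs i
        omega
  have h3h : h3 = h := sub_eq_zero.mp heq
  rw [← congrArg (MvPolynomial.coeff (redE e)) h3h, hh3, MvPolynomial.coeff_sum]
  simp only [MvPolynomial.coeff_monomial, redE_inj.eq_iff]
  rw [Finset.sum_ite_eq']
  split_ifs with hs
  · rfl
  · rw [MvPolynomial.notMem_support_iff.mp hs]
    simp

lemma exp_form (e : Fin 5 →₀ ℕ) (h1 : ∑ i, e i = 4) (h2 : ∑ i, redE e i = 4) :
    ∃ i j, e = Finsupp.single i 1 + Finsupp.single j 3 := by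
  obtain ⟨j, hj⟩ : ∃ j, 3 ≤ e j := by
    by_contra hcon
    push Not at hcon
    have : ∀ i, redE e i = 3 * e i := by
      intro i
      change red3 (e i) = _
      unfold red3
      rw [if_pos (by have := hcon i; omega)]
    simp only [this] at h2
    rw [← Finset.mul_sum] at h2
    omega
  have hle : Finsupp.single j 3 ≤ e := by simpa using hj
  obtain ⟨e', rfl⟩ := exists_add_of_le hle
  have : ∑ i, e' i = 1 := by
    simp only [Finsupp.add_apply, Finset.sum_add_distrib] at h1
    have hs : ∑ i, (Finsupp.single j 3 : Fin 5 →₀ ℕ) i = 3 := by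
      simp [Finsupp.single_apply]
    omega
  have hd : e'.sum (fun _ n => n) = 1 := by
    rw [Finsupp.sum_fintype _ _ (fun _ => rfl)]
    exact this
  obtain ⟨i, hi⟩ := (Finsupp.sum_eq_one_iff e').mp hd
  exact ⟨i, j, by rw [hi, add_comm]⟩

lemma exp_inj : Function.Injective (fun p : Fin 5 × Fin 5 =>
    (Finsupp.single p.1 1 + Finsupp.single p.2 3 : Fin 5 →₀ ℕ)) := by
  rintro ⟨i, j⟩ ⟨k, l⟩ h
  simp only at h
  have hjl : j = l := by
    by_contra hne
    have := DFunLike.congr_fun h j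
    simp only [Finsupp.add_apply, Finsupp.single_apply] at this
    rw [if_neg (fun hh : l = j => hne hh.symm), if_true] at this
    split_ifs at this <;> omega
  subst hjl
  have := add_right_cancel h
  have := Finsupp.single_left_injective one_ne_zero this
  rw [this]

lemma redE_exp (i j : Fin 5) : redE (Finsupp.single i 1 + Finsupp.single j 3) =
    Finsupp.single j 1 + Finsupp.single i 3 := by
  ext k
  change red3 _ = _
  simp only [Finsupp.add_apply, Finsupp.single_apply]
  split_ifs <;> rfl

lemma hermitian_form (hF : Fintype.card F = 9) {h : MvPolynomial (Fin 5) F}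
    (hh : h.IsHomogeneous 4)
    (hv : ∀ v, MvPolynomial.eval v h ^ 3 = MvPolynomial.eval v h) :
    ∃ M : Matrix (Fin 5) (Fin 5) F, (∀ i j, M j i = M i j ^ 3) ∧
      ∀ v, MvPolynomial.eval v h = ∑ i, ∑ j, v i * M i j * v j ^ 3 := by
  classical
  refine ⟨fun i j => MvPolynomial.coeff (Finsupp.single i 1 + Finsupp.single j 3) h, ?_, ?_⟩
  · intro i j
    rw [← cube_coeff hF hh hv, redE_exp]
  · intro v
    have hsub : h.support ⊆ (Finset.univ : Finset (Fin 5 × Fin 5)).image (fun p =>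
        (Finsupp.single p.1 1 + Finsupp.single p.2 3 : Fin 5 →₀ ℕ)) := by
      intro e he
      have hdeg : ∀ e ∈ h.support, ∑ i, e i = 4 := by
        intro e he
        by_contra hne
        rw [← Finsupp.degree_eq_sum] at hne
        exact (MvPolynomial.mem_support_iff.mp he) (hh.coeff_eq_zero hne)
      have hr : redE e ∈ h.support := by
        rw [MvPolynomial.mem_support_iff, cube_coeff hF hh hv]
        exact pow_ne_zero _ (MvPolynomial.mem_support_iff.mp he)
      obtain ⟨i, j, hij⟩ := exp_form e (hdeg e he) (hdeg _ hr)
      rw [Finset.mem_image]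
      exact ⟨(i, j), Finset.mem_univ _, hij.symm⟩
    rw [MvPolynomial.eval_eq', Finset.sum_subset hsub (fun e _ he => by
      rw [MvPolynomial.notMem_support_iff.mp he, zero_mul]),
      Finset.sum_image (fun p _ q _ hpq => exp_inj hpq), Fintype.sum_prod_type]
    refine Finset.sum_congr rfl fun i _ => Finset.sum_congr rfl fun j _ => ?_
    have : ∏ k, v k ^ (Finsupp.single i 1 + Finsupp.single j 3 : Fin 5 →₀ ℕ) k =
        v i * v j ^ 3 := by
      simp only [Finsupp.add_apply, pow_add, Finset.prod_mul_distrib]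
      simp [Finsupp.single_apply, pow_ite]
    rw [this]
    ring

end Coeffs

section Final
variable {F : Type} [Field F] [Fintype F]

/-- The sesquilinear form of `M`. -/
def sesq (M : Matrix (Fin 5) (Fin 5) F) (v w : Fin 5 → F) : F :=
  ∑ i, ∑ j, v i * M i j * w j ^ 3

lemma cube_add (hF : Fintype.card F = 9) (x y : F) : (x + y) ^ 3 = x ^ 3 + y ^ 3 := by
  linear_combination (x ^ 2 * y + x * y ^ 2) * char_three hF

lemma sesq_add_left (M : Matrix (Fin 5) (Fin 5) F) (v v' w : Fin 5 → F) :
    sesq M (v + v') w = sesq M v w + sesq M v' w := by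
  simp only [sesq, Pi.add_apply, add_mul, Finset.sum_add_distrib]

lemma sesq_smul_left (M : Matrix (Fin 5) (Fin 5) F) (r : F) (v w : Fin 5 → F) :
    sesq M (r • v) w = r * sesq M v w := by
  simp only [sesq, Pi.smul_apply, smul_eq_mul, Finset.mul_sum, mul_assoc]

lemma sesq_add_right (hF : Fintype.card F = 9) (M : Matrix (Fin 5) (Fin 5) F)
    (v w w' : Fin 5 → F) : sesq M v (w + w') = sesq M v w + sesq M v w' := by
  simp only [sesq, Pi.add_apply, cube_add hF, mul_add, Finset.sum_add_distrib]

lemma sesq_smul_right (M : Matrix (Fin 5) (Fin 5) F) (r : F) (v w : Fin 5 → F) :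
    sesq M v (r • w) = r ^ 3 * sesq M v w := by
  simp only [sesq, Pi.smul_apply, smul_eq_mul, Finset.mul_sum, mul_pow]
  refine Finset.sum_congr rfl fun i _ => Finset.sum_congr rfl fun j _ => ?_
  ring

lemma sesq_symm (hF : Fintype.card F = 9) {M : Matrix (Fin 5) (Fin 5) F}
    (hM : ∀ i j, M j i = M i j ^ 3) (v w : Fin 5 → F) : sesq M w v = sesq M v w ^ 3 := by
  have : Fact (Nat.Prime 3) := ⟨Nat.prime_three⟩
  have : CharP F 3 := (CharP.charP_iff_prime_eq_zero Nat.prime_three).mpr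
    (by exact_mod_cast char_three hF)
  unfold sesq
  rw [sum_pow_char 3]
  simp only [sum_pow_char 3]
  rw [Finset.sum_comm]
  refine Finset.sum_congr rfl fun i _ => Finset.sum_congr rfl fun j _ => ?_
  rw [hM i j]
  have := pow_nine hF (w j)
  linear_combination -(M i j ^ 3 * v i ^ 3) * this

lemma exists_fourth (hF : Fintype.card F = 9) {w : F} (hw : w ^ 3 = w) : ∃ z : F, z ^ 4 = w := by
  have hf : w * ((w - 1) * (w + 1)) = 0 := by linear_combination hw
  rcases mul_eq_zero.mp hf with h | h
  · exact ⟨0, by rw [h]; ring⟩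
  rcases mul_eq_zero.mp h with h | h
  · exact ⟨1, by linear_combination -h⟩
  · by_contra hcon
    push Not at hcon
    have h4 : ∀ z : F, z * (z ^ 4 - 1) = 0 := by
      intro z
      by_cases hz : z = 0
      · rw [hz]; ring
      have h8 := pow_eight hF hz
      have : (z ^ 4 - 1) * (z ^ 4 - w) = 0 := by
        linear_combination h8 - (z ^ 4 - 1) * h
      rcases mul_eq_zero.mp this with h | h'
      · rw [h]; ring
      · exact absurd (sub_eq_zero.mp h') (hcon z)
    have := (poly9 hF 0 (-1) 0 0 0 1 0 0 0 (by intro r; linear_combination h4 r)).2.1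
    simp at this

lemma exists_isotropic (hF : Fintype.card F = 9) {M : Matrix (Fin 5) (Fin 5) F}
    (hM : ∀ i j, M j i = M i j ^ 3) (w1 w2 : Fin 5 → F) :
    ∃ a b : F, (a ≠ 0 ∨ b ≠ 0) ∧ sesq M (a • w1 + b • w2) (a • w1 + b • w2) = 0 := by
  set A := sesq M w1 w1 with hA
  set D := sesq M w2 w2 with hD
  set β := sesq M w1 w2 with hβ
  have hA3 : A ^ 3 = A := (sesq_symm hF hM w1 w1).symm
  have hD3 : D ^ 3 = D := (sesq_symm hF hM w2 w2).symm
  have hB : sesq M w2 w1 = β ^ 3 := sesq_symm hF hM w1 w2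
  by_cases hD0 : D = 0
  · exact ⟨0, 1, Or.inr one_ne_zero, by simpa using hD0⟩
  have hD2 : D ^ 2 = 1 := by
    apply mul_left_cancel₀ hD0
    linear_combination hD3
  have h3 := char_three hF
  have b9 := pow_nine hF β
  obtain ⟨z, hz⟩ := exists_fourth hF (w := β ^ 4 - A * D) (by
    have e : (β ^ 4 - A * D) ^ 3 = (β ^ 4) ^ 3 - A ^ 3 * D ^ 3 := by
      linear_combination (-β ^ 8 * A * D + β ^ 4 * A ^ 2 * D ^ 2) * h3
    rw [e, hA3, hD3]
    linear_combination β ^ 3 * b9)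
  refine ⟨1, z - D * β, Or.inl one_ne_zero, ?_⟩
  rw [one_smul, sesq_add_left, sesq_add_right hF, sesq_add_right hF, sesq_smul_left, sesq_smul_right,
    sesq_smul_left, sesq_smul_right, ← hA, ← hD, ← hβ, hB]
  have e3 : (z - D * β) ^ 3 = z ^ 3 - D ^ 3 * β ^ 3 := by
    linear_combination (-z ^ 2 * D * β + z * D ^ 2 * β ^ 2) * h3
  rw [e3, hD3]
  linear_combination D * hz + (- z * β ^ 3 - z ^ 3 * β + D * β ^ 4 - A) * hD2

lemma det_unit (hF : Fintype.card F = 9) [DecidableEq F] {M : Matrix (Fin 5) (Fin 5) F}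
    (hM : ∀ i j, M j i = M i j ^ 3)
    (hN : 19521 ≤ (Finset.univ.filter fun v => sesq M v v = 0).card)
    (hnp : ∀ a b c : Fin 5 → F, LinearIndependent F ![a, b, c] →
      ∃ r s t : F, sesq M (r • a + s • b + t • c) (r • a + s • b + t • c) ≠ 0) :
    IsUnit M.det := by
  rw [isUnit_iff_ne_zero]
  intro hdet
  obtain ⟨y, hy0, hy⟩ := Matrix.exists_mulVec_eq_zero_iff.mpr hdet
  set u : Fin 5 → F := fun i => y i ^ 3 with hu
  have hu0 : u ≠ 0 := by
    intro h
    apply hy0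
    funext i
    have := congrFun h i
    simpa [hu] using this
  have hBu : ∀ v, sesq M v u = 0 := by
    intro v
    unfold sesq
    refine Finset.sum_eq_zero fun i _ => ?_
    have := congrFun hy i
    simp only [Matrix.mulVec, dotProduct, Pi.zero_apply] at this
    have e : ∀ j, u j ^ 3 = y j := fun j => by
      rw [hu]
      linear_combination pow_nine hF (y j)
    simp only [e, mul_assoc]
    rw [← Finset.mul_sum, this, mul_zero]
  have hBu' : ∀ v, sesq M u v = 0 := fun v => by
    rw [sesq_symm hF hM v u, hBu]; ring
  obtain ⟨v, hv, hvu⟩ : ∃ v, sesq M v v = 0 ∧ v ∉ Finset.univ.image (fun r : F => r • u) := by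
    by_contra hcon
    push Not at hcon
    have hs : (Finset.univ.filter fun v => sesq M v v = 0) ⊆
        Finset.univ.image (fun r : F => r • u) := fun v hv =>
      hcon v (Finset.mem_filter.mp hv).2
    have h1 := Finset.card_le_card hs
    have h2 := Finset.card_image_le (s := Finset.univ) (f := fun r : F => r • u)
    rw [Finset.card_univ, hF] at h2
    omega
  have hli2 : LinearIndependent F ![v, u] := by
    have h1 : LinearIndependent F ![u] := by
      rw [linearIndependent_unique_iff]
      exact hu0
    refine linearIndependent_finCons.mpr ⟨h1, ?_⟩
    intro hmem
    rw [Matrix.range_cons, Matrix.range_empty, Set.union_empty,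
      Submodule.mem_span_singleton] at hmem
    obtain ⟨r, hr⟩ := hmem
    exact hvu (Finset.mem_image.mpr ⟨r, Finset.mem_univ _, hr⟩)
  let ℓ : (Fin 5 → F) →ₗ[F] F :=
    { toFun := fun w => sesq M w v
      map_add' := fun a b => sesq_add_left M a b v
      map_smul' := fun r a => sesq_smul_left M r a v }
  have hT : 4 ≤ Module.finrank F (LinearMap.ker ℓ) := by
    have h1 := LinearMap.finrank_range_add_finrank_ker ℓ
    have h2 := Submodule.finrank_le (LinearMap.range ℓ)
    rw [Module.finrank_self] at h2
    rw [Module.finrank_fin_fun] at h1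
    omega
  have pick : ∀ {k : ℕ} (b : Fin k → Fin 5 → F), k < 4 →
      ∃ w, sesq M w v = 0 ∧ w ∉ Submodule.span F (Set.range b) := by
    intro k b hk
    by_contra hcon
    push Not at hcon
    have hle : LinearMap.ker ℓ ≤ Submodule.span F (Set.range b) := fun w hw => hcon w hw
    have h1 := Submodule.finrank_mono hle
    have h2 : Module.finrank F (Submodule.span F (Set.range b)) ≤ Fintype.card (Fin k) :=
      finrank_range_le_card b
    rw [Fintype.card_fin] at h2
    omega
  obtain ⟨w1, hw1, hm1⟩ := pick ![v, u] (by norm_num)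
  obtain ⟨w2, hw2, hm2⟩ := pick ![w1, v, u] (by norm_num)
  have hli4 : LinearIndependent F ![w2, w1, v, u] :=
    linearIndependent_finCons.mpr ⟨linearIndependent_finCons.mpr ⟨hli2, hm1⟩, hm2⟩
  obtain ⟨a, b, hab, hiso⟩ := exists_isotropic hF hM w1 w2
  set w := a • w1 + b • w2 with hw
  have hwv : sesq M w v = 0 := by
    rw [hw, sesq_add_left, sesq_smul_left, sesq_smul_left, hw1, hw2]; ring
  have hvw : sesq M v w = 0 := by
    rw [sesq_symm hF hM w v, hwv]; ring
  have hli3 : LinearIndependent F ![w, v, u] := by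
    rw [Fintype.linearIndependent_iff] at hli4 ⊢
    intro g hg
    have h4 := hli4 ![g 0 * b, g 0 * a, g 1, g 2] (by
      rw [Fin.sum_univ_three] at hg
      rw [Fin.sum_univ_four]
      rw [← hg]
      simp only [Matrix.cons_val, hw]
      module)
    have e0 : g 0 * b = 0 := h4 0
    have e1 : g 0 * a = 0 := h4 1
    have e2 : g 1 = 0 := h4 2
    have e3 : g 2 = 0 := h4 3
    have e : g 0 = 0 := by
      rcases hab with h | h
      · exact (mul_eq_zero.mp e1).resolve_right h
      · exact (mul_eq_zero.mp e0).resolve_right h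
    intro i
    fin_cases i
    · exact e
    · exact e2
    · exact e3
  obtain ⟨r, s, t, hne⟩ := hnp w v u hli3
  apply hne
  simp only [sesq_add_left, sesq_add_right hF, sesq_smul_left, sesq_smul_right, hBu, hBu', hiso, hv,
    hwv, hvw]
  ring

end Final

/-- If `X` is a hypersurface of `PG(4,9)` of degree `4` defined over `GF(9)`, containing
no plane, with `3⁷ + 3⁵ + 3² + 1` rational points, and some plane meets `X` in exactly
`3² + 1 = 10` rational points, then `X` is a non-singular Hermitian variety `H(4,9)`. -/
theorem stmt_15 (F : Type) [Field F] [Fintype F] (hcardF : Fintype.card F = 9)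
    (f : MvPolynomial (Fin 5) F) (hf0 : f ≠ 0) (hfdeg : f.IsHomogeneous 4)
    (X : Set (Projectivization F (Fin 5 → F))) (hX : X = hypersurfacePts f)
    (hnoplane : ¬ ∃ W : Submodule F (Fin 5 → F), Module.finrank F W = 3 ∧ projPts W ⊆ X)
    (hcardX : X.ncard = 3 ^ 7 + 3 ^ 5 + 3 ^ 2 + 1)
    (hplane : ∃ W : Submodule F (Fin 5 → F), Module.finrank F W = 3 ∧
      (X ∩ projPts W).ncard = 10) :
    IsNonsingularHermitian 3 X := by
  classical
  subst hX
  have hN := count_zeros hcardF hfdeg (by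
    have h2 : (3 ^ 7 + 3 ^ 5 + 3 ^ 2 + 1 : ℕ) = 2440 := by norm_num
    rw [← h2]
    exact hcardX)
  have hnW : ¬ ∃ W : Submodule F (Fin 5 → F), Module.finrank F W = 3 ∧
      ∀ v ∈ W, MvPolynomial.eval v f = 0 := by
    rintro ⟨W, hW, hv⟩
    refine hnoplane ⟨W, hW, ?_⟩
    intro P hP
    have hP2 : P.submodule ≤ W := hP
    apply hv
    apply hP2
    rw [Projectivization.submodule_eq]
    exact Submodule.mem_span_singleton_self _
  have hnp := noplane hnW
  obtain ⟨μ, hμ, hr⟩ := reduce hcardF hf0 hfdeg hN hnp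
  obtain ⟨M, hM, hMv⟩ := hermitian_form hcardF (h := MvPolynomial.C μ * f) (hfdeg.C_mul μ)
    (by intro v; simpa using hr v)
  have key : ∀ v, sesq M v v = μ * MvPolynomial.eval v f := by
    intro v
    have := hMv v
    simp only [map_mul, MvPolynomial.eval_C] at this
    exact this.symm
  have key0 : ∀ v, sesq M v v = 0 ↔ MvPolynomial.eval v f = 0 := by
    intro v
    rw [key v]
    simp [hμ]
  have hdet : IsUnit M.det := by
    apply det_unit hcardF hM
    · simpa only [key0] using hN
    · intro a b c hli
      obtain ⟨r, s, t, h⟩ := hnp a b c hli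
      exact ⟨r, s, t, fun h0 => h ((key0 _).1 h0)⟩
  refine ⟨M, hdet, ?_, ?_⟩
  · ext i j
    simp [hM i j]
  · ext P
    exact (key0 P.rep).symm
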